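/- arXiv:1011.1544 — 2 statements merged into one kernel-verified Lean document; each statement's English description precedes it below -/
import Mathlib

section
/- Let U ⊆ ℝ^m be a connected and simply connected open set, n ≥ 1, and let A_1,…,A_m : U → ℝ^{n×n} be smooth matrix-valued maps such that A_k(q) is skew-symmetric for every q ∈ U and k, and such that ∂_k A_l − ∂_l A_k = A_l A_k − A_k A_l holds on U for all k, l ∈ {1,…,m} (the flatness/integrability condition). Then for every p_0 ∈ U and every F_0 ∈ SO(n) there exists a unique smooth map F : U → SO(n) with F(p_0) = F_0 and ∂_k F = F A_k on U for all k = 1,…,m. -/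
open scoped Matrix

noncomputable section

/-- Partial derivative of a scalar function in the `k`-th coordinate direction. -/
def pdr {m : ℕ} (k : Fin m) (g : (Fin m → ℝ) → ℝ) : (Fin m → ℝ) → ℝ :=
  fun q => fderiv ℝ g q (Pi.single k 1)

/-- Entrywise partial derivative of a matrix-valued map. -/
def pdM {m N : ℕ} (k : Fin m) (A : (Fin m → ℝ) → Matrix (Fin N) (Fin N) ℝ) :
    (Fin m → ℝ) → Matrix (Fin N) (Fin N) ℝ :=
  fun q => Matrix.of fun i j => pdr k (fun x => A x i j) q

/-!
Along each ray from a point `q`, the equation `dF = F ω` is a linear ordinary differential equation;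
solving it with initial value `1` at `q` defines a candidate frame near `q`. To see that it is a
solution in all directions, compare the solution along the segment to `x + h` with
`f (1 + t ω h)`, where `f` is the solution along the segment to `x`: by flatness the latter solves
the former's equation up to `o(h)`, so Grönwall's inequality gives the derivative at `x`.

Two invertible frames differ by left multiplication by a locally constant factor, so the frames form
a covering space of `U`, which has a section because `U` is simply connected. When `ω` is
skew-symmetric, `F Fᵀ` is constant, so a frame which is in `SO(n)` at one point stays there.
-/

section LinearODE

open Set

variable {𝔸 : Type*} [NormedRing 𝔸] [NormedAlgebra ℝ 𝔸]

lemma exists_hasDerivWithinAt_mul [CompleteSpace 𝔸] {a : ℝ → 𝔸} (ha : ContinuousOn a (Icc 0 1))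
    (hbound : ∀ t ∈ Icc (0 : ℝ) 1, ‖a t‖ ≤ 1 / 2) (c : 𝔸) :
    ∃ f : ℝ → 𝔸, f 0 = c ∧
      ∀ t ∈ Icc (0 : ℝ) 1, HasDerivWithinAt f (f t * a t) (Icc 0 1) t := by
  have hPL : IsPicardLindelof (fun t x => x * a t) (⟨0, by simp⟩ : Icc (0 : ℝ) 1) c
      ‖c‖₊ 0 ‖c‖₊ (1 / 2) :=
    { lipschitzOnWith t ht := LipschitzOnWith.of_dist_le_mul fun x _ y _ => by
        rw [dist_eq_norm, dist_eq_norm, ← sub_mul, mul_comm]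
        exact (norm_mul_le _ _).trans
          (mul_le_mul_of_nonneg_left (by simpa using hbound t ht) (norm_nonneg _))
      continuousOn _ _ := continuousOn_const.mul ha
      norm_le t ht x hx := by
        have hx' : ‖x‖ ≤ ‖c‖ + ‖c‖ :=
          (norm_le_norm_add_norm_sub' x c).trans
            (by gcongr; simpa [dist_eq_norm] using hx)
        calc ‖x * a t‖ ≤ ‖x‖ * ‖a t‖ := norm_mul_le _ _
          _ ≤ (‖c‖ + ‖c‖) * (1 / 2) := by gcongr; exact hbound t ht
          _ = ‖c‖ := by ring
      mul_max_le := by simp }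
  exact hPL.exists_eq_forall_mem_Icc_hasDerivWithinAt₀

lemma norm_sub_le_gronwallBound_of_mul {a f g g' : ℝ → 𝔸} {K ε : ℝ}
    (ha : ∀ t ∈ Icc (0 : ℝ) 1, ‖a t‖ ≤ K)
    (hf : ∀ t ∈ Icc (0 : ℝ) 1, HasDerivWithinAt f (f t * a t) (Icc 0 1) t)
    (hg : ∀ t ∈ Icc (0 : ℝ) 1, HasDerivWithinAt g (g' t) (Icc 0 1) t)
    (hε : ∀ t ∈ Icc (0 : ℝ) 1, ‖g' t - g t * a t‖ ≤ ε) (h₀ : f 0 = g 0) :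
    ‖g 1 - f 1‖ ≤ gronwallBound 0 K ε 1 := by
  have hderiv : ∀ t ∈ Icc (0 : ℝ) 1,
      HasDerivWithinAt (g - f) (g' t - f t * a t) (Icc 0 1) t :=
    fun t ht => (hg t ht).sub (hf t ht)
  have hright : ∀ t ∈ Ico (0 : ℝ) 1,
      HasDerivWithinAt (g - f) (g' t - f t * a t) (Ici t) t := fun t ht =>
    (hderiv t (Ico_subset_Icc_self ht)).mono_of_mem_nhdsWithin
      (Filter.mem_of_superset (Icc_mem_nhdsGE ht.2) (Icc_subset_Icc_left ht.1))
  have hgrowth : ∀ t ∈ Ico (0 : ℝ) 1, ‖g' t - f t * a t‖ ≤ K * ‖(g - f) t‖ + ε := by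
    intro t ht
    have ht' := Ico_subset_Icc_self ht
    calc ‖g' t - f t * a t‖ = ‖(g - f) t * a t + (g' t - g t * a t)‖ := by
          congr 1; simp only [Pi.sub_apply]; noncomm_ring
      _ ≤ ‖(g - f) t‖ * ‖a t‖ + ‖g' t - g t * a t‖ :=
          (norm_add_le _ _).trans (by gcongr; exact norm_mul_le _ _)
      _ ≤ ‖(g - f) t‖ * K + ε := by gcongr; exacts [ha t ht', hε t ht']
      _ = K * ‖(g - f) t‖ + ε := by ring
  simpa using norm_le_gronwallBound_of_norm_deriv_right_le
    (fun t ht => (hderiv t ht).continuousWithinAt) hright (δ := 0) (by simp [h₀]) hgrowth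
    1 (by simp)

end LinearODE

section Asymptotics

open Asymptotics Filter Topology

variable {α 𝕜 E F : Type*} [NontriviallyNormedField 𝕜] [NormedAddCommGroup E] [NormedSpace 𝕜 E]
  [NormedAddCommGroup F] [NormedSpace 𝕜 F]

lemma isBigO_clm_apply {l : Filter α} {L : α → E →L[𝕜] F} (v : α → E) {L₀ : E →L[𝕜] F}
    (hL : Tendsto L l (𝓝 L₀)) : (fun p => L p (v p)) =O[l] v := by
  have h : (fun p => ‖L p‖ * ‖v p‖) =O[l] fun p => (1 : ℝ) * ‖v p‖ :=
    (hL.norm.isBigO_one ℝ).mul (isBigO_refl _ _)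
  refine (IsBigO.of_norm_le fun p => (L p).le_opNorm (v p)).trans ?_
  simpa using h

lemma isLittleO_clm_apply {l : Filter α} {L : α → E →L[𝕜] F} (v : α → E)
    (hL : Tendsto L l (𝓝 0)) : (fun p => L p (v p)) =o[l] v := by
  have h : (fun p => ‖L p‖ * ‖v p‖) =o[l] fun p => (1 : ℝ) * ‖v p‖ :=
    ((isLittleO_one_iff ℝ).2 (tendsto_zero_iff_norm_tendsto_zero.1 hL)).mul_isBigO
      (isBigO_refl _ _)
  refine (IsBigO.of_norm_le fun p => (L p).le_opNorm (v p)).trans_isLittleO ?_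
  simpa using h

end Asymptotics

section ParallelFrame

open Set Filter Topology

variable {E 𝔸 : Type*} [NormedAddCommGroup E] [NormedSpace ℝ E]
  [NormedRing 𝔸] [NormedAlgebra ℝ 𝔸]

/-- `F` solves `dF = F ω` at `x`, where `ω` is a 1-form on `E` with values in the algebra `𝔸`.
`F x • ω x` is the 1-form `ω x` followed by left multiplication by `F x`. -/
def IsParallelFrameAt (ω : E → E →L[ℝ] 𝔸) (F : E → 𝔸) (x : E) : Prop :=
  HasFDerivAt F (F x • ω x) x

/-- The vanishing of the curvature of `ω` at `x`: the equality of mixed second derivatives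
for solutions of `dF = F ω`. In the notation of forms, `dω + ω ∧ ω = 0`. -/
def IsFlatFormAt (ω : E → E →L[ℝ] 𝔸) (x : E) : Prop :=
  ∀ u v, fderiv ℝ ω x u v - fderiv ℝ ω x v u = ω x v * ω x u - ω x u * ω x v

variable {ω : E → E →L[ℝ] 𝔸} {F G : E → 𝔸} {x : E}

lemma isFlatFormAt_of_basis {ι : Type*} (b : Module.Basis ι ℝ E)
    (h : ∀ i j, fderiv ℝ ω x (b i) (b j) - fderiv ℝ ω x (b j) (b i)
      = ω x (b j) * ω x (b i) - ω x (b i) * ω x (b j)) :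
    IsFlatFormAt ω x := by
  let mul := ContinuousLinearMap.mul ℝ 𝔸
  have hcurv : fderiv ℝ ω x - (fderiv ℝ ω x).flip
      = mul.flip.bilinearComp (ω x) (ω x) - mul.bilinearComp (ω x) (ω x) :=
    ContinuousLinearMap.coe_injective (b.ext fun i =>
      ContinuousLinearMap.coe_injective (b.ext fun j => by simpa [mul] using h i j))
  exact fun u v => by simpa [mul] using DFunLike.congr_fun (DFunLike.congr_fun hcurv u) v

namespace IsParallelFrameAt

lemma hasFDerivAt (hF : IsParallelFrameAt ω F x) : HasFDerivAt F (F x • ω x) x := hF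

lemma congr (hF : IsParallelFrameAt ω F x) (h : G =ᶠ[𝓝 x] F) : IsParallelFrameAt ω G x := by
  rw [IsParallelFrameAt, h.eq_of_nhds]
  exact hF.hasFDerivAt.congr_of_eventuallyEq h

lemma const_mul (hF : IsParallelFrameAt ω F x) (c : 𝔸) :
    IsParallelFrameAt ω (fun y => c * F y) x := by
  rw [IsParallelFrameAt, mul_smul]
  exact hF.hasFDerivAt.const_mul c

lemma hasFDerivAt_mul_inv [CompleteSpace 𝔸] {Φ : E → 𝔸ˣ} (hF : IsParallelFrameAt ω F x)
    (hΦ : IsParallelFrameAt ω (fun y => (Φ y : 𝔸)) x) :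
    HasFDerivAt (fun y => F y * ↑(Φ y)⁻¹) (0 : E →L[ℝ] 𝔸) x := by
  have hinv := (hasFDerivAt_ringInverse (𝕜 := ℝ) (Φ x)).comp x hΦ.hasFDerivAt
  simp only [Function.comp_def, Ring.inverse_unit] at hinv
  refine (hF.hasFDerivAt.mul' hinv).congr_fderiv ?_
  ext v
  simp [mul_assoc]

lemma hasFDerivAt_mul_star [StarRing 𝔸] [StarModule ℝ 𝔸] [ContinuousStar 𝔸]
    (hF : IsParallelFrameAt ω F x) (hω : ∀ v, star (ω x v) = -ω x v) :
    HasFDerivAt (fun y => F y * star (F y)) (0 : E →L[ℝ] 𝔸) x := by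
  refine (hF.hasFDerivAt.mul' hF.hasFDerivAt.star).congr_fderiv ?_
  ext v
  simp [hω, mul_assoc]

end IsParallelFrameAt

variable {U : Set E}

lemma contDiffOn_of_isParallelFrameAt (hU : IsOpen U) (hF : ∀ x ∈ U, IsParallelFrameAt ω F x)
    {r : ℕ∞} (hω : ContDiffOn ℝ r ω U) : ContDiffOn ℝ (r + 1) F U := by
  have hdiff : DifferentiableOn ℝ F U := fun x hx =>
    (hF x hx).hasFDerivAt.differentiableAt.differentiableWithinAt
  have hsucc : ∀ s : ℕ∞, ContDiffOn ℝ s ω U → ContDiffOn ℝ s F U → ContDiffOn ℝ (s + 1) F U := by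
    intro s hωs hFs
    refine (contDiffOn_succ_iff_fderiv_of_isOpen hU).2 ⟨hdiff, by simp, ?_⟩
    exact (((ContinuousLinearMap.mul ℝ 𝔸).contDiff.comp_contDiffOn hFs).clm_comp hωs).congr
      fun x hx => (hF x hx).hasFDerivAt.fderiv
  refine hsucc r hω ?_
  induction r using ENat.nat_induction with
  | zero => exact contDiffOn_zero.2 hdiff.continuousOn
  | succ s ih =>
    have hωs : ContDiffOn ℝ (s : ℕ∞) ω U := hω.of_le (by exact_mod_cast Nat.le_succ s)
    exact_mod_cast hsucc s hωs (ih hωs)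
  | top ih =>
    exact contDiffOn_infty.2 fun s => ih s (hω.of_le (by exact_mod_cast le_top))

lemma eqOn_of_isParallelFrameAt [CompleteSpace 𝔸] (hU : IsOpen U) (hUc : IsPreconnected U)
    {Φ : E → 𝔸ˣ} (hF : ∀ x ∈ U, IsParallelFrameAt ω F x)
    (hΦ : ∀ x ∈ U, IsParallelFrameAt ω (fun y => (Φ y : 𝔸)) x) {p : E} (hp : p ∈ U) :
    EqOn F (fun x => F p * ↑(Φ p)⁻¹ * Φ x) U := by
  intro x hx
  have hderiv : ∀ x ∈ U, HasFDerivAt (fun y => F y * ↑(Φ y)⁻¹) (0 : E →L[ℝ] 𝔸) x := fun x hx =>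
    (hF x hx).hasFDerivAt_mul_inv (hΦ x hx)
  have := hU.is_const_of_fderiv_eq_zero hUc
    (fun x hx => (hderiv x hx).differentiableAt.differentiableWithinAt)
    (fun x hx => (hderiv x hx).fderiv) hx hp
  simp [← this]

lemma exists_eventuallyEq_const_mul_of_isParallelFrameAt [CompleteSpace 𝔸] {Φ Ψ : E → 𝔸ˣ}
    (hΦ : ∀ᶠ y in 𝓝 x, IsParallelFrameAt ω (fun z => (Φ z : 𝔸)) y)
    (hΨ : ∀ᶠ y in 𝓝 x, IsParallelFrameAt ω (fun z => (Ψ z : 𝔸)) y) :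
    ∃ c, Φ =ᶠ[𝓝 x] fun y => c * Ψ y := by
  obtain ⟨r, hr, hball⟩ := Metric.nhds_basis_ball.eventually_iff.1 (hΦ.and hΨ)
  refine ⟨Φ x * (Ψ x)⁻¹, ?_⟩
  filter_upwards [Metric.ball_mem_nhds x hr] with y hy
  exact Units.ext (eqOn_of_isParallelFrameAt Metric.isOpen_ball
    (convex_ball x r).isPreconnected (fun z hz => (hball hz).1) (fun z hz => (hball hz).2)
    (Metric.mem_ball_self hr) hy)

lemma mul_star_eq_of_isParallelFrameAt [StarRing 𝔸] [StarModule ℝ 𝔸] [ContinuousStar 𝔸]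
    (hU : IsOpen U) (hUc : IsPreconnected U) (hF : ∀ x ∈ U, IsParallelFrameAt ω F x)
    (hω : ∀ x ∈ U, ∀ v, star (ω x v) = -ω x v) {p q : E} (hp : p ∈ U) (hq : q ∈ U) :
    F p * star (F p) = F q * star (F q) := by
  have hderiv : ∀ x ∈ U, HasFDerivAt (fun y => F y * star (F y)) (0 : E →L[ℝ] 𝔸) x :=
    fun x hx => (hF x hx).hasFDerivAt_mul_star (hω x hx)
  exact hU.is_const_of_fderiv_eq_zero hUc
    (fun x hx => (hderiv x hx).differentiableAt.differentiableWithinAt)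
    (fun x hx => (hderiv x hx).fderiv) hp hq

end ParallelFrame

section RadialTransport

open Set Filter Topology Asymptotics AffineMap

variable {E 𝔸 : Type*} [NormedAddCommGroup E] [NormedSpace ℝ E]
  [NormedRing 𝔸] [NormedAlgebra ℝ 𝔸]

/-- The coefficient `a` of the linear equation `f' = f a` which a solution of `dF = F ω` satisfies
along the segment from `q` to `x`. -/
def radialCoeff (ω : E → E →L[ℝ] 𝔸) (q x : E) (t : ℝ) : 𝔸 := ω (lineMap q x t) (x - q)

variable {ω : E → E →L[ℝ] 𝔸} {q x : E}

lemma isLittleO_radialCoeff_add {t₀ : ℝ} (hω : ContDiffAt ℝ 1 ω (lineMap q x t₀)) :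
    (fun p : E × ℝ => radialCoeff ω q (x + p.1) p.2 - (radialCoeff ω q x p.2
      + ω (lineMap q x p.2) p.1 + p.2 • fderiv ℝ ω (lineMap q x p.2) p.1 (x - q)))
      =o[𝓝 (0, t₀)] Prod.fst := by
  set c : E × ℝ → E := fun p => lineMap q x p.2
  set c' : E × ℝ → E := fun p => lineMap q (x + p.1) p.2
  have hc : Tendsto c (𝓝 (0, t₀)) (𝓝 (lineMap q x t₀)) := by
    have : Continuous c := by fun_prop
    exact this.tendsto' _ _ rfl
  have hc' : Tendsto c' (𝓝 (0, t₀)) (𝓝 (lineMap q x t₀)) := by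
    have : Continuous c' := by simp only [c', lineMap_apply_module]; fun_prop
    exact this.tendsto' _ _ (by simp [c'])
  have hsub : ∀ p, c' p - c p = p.2 • p.1 := fun p => by
    simp only [c, c', lineMap_apply_module]; module
  have hO : (fun p : E × ℝ => p.2 • p.1) =O[𝓝 (0, t₀)] Prod.fst := by
    simpa using (continuous_snd.continuousAt.isBigO_one ℝ).smul (isBigO_refl Prod.fst (𝓝 (0, t₀)))
  have hstrict : (fun p => ω (c' p) - ω (c p) - fderiv ℝ ω (lineMap q x t₀) (p.2 • p.1))
      =o[𝓝 (0, t₀)] Prod.fst := by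
    have := (hω.hasStrictFDerivAt one_ne_zero).isLittleO.comp_tendsto (hc'.prodMk_nhds hc)
    simp only [Function.comp_def, hsub] at this
    exact this.trans_isBigO hO
  have hvary : (fun p => (fderiv ℝ ω (c p) - fderiv ℝ ω (lineMap q x t₀)) (p.2 • p.1))
      =o[𝓝 (0, t₀)] Prod.fst := by
    have hfd : ContinuousAt (fderiv ℝ ω) (lineMap q x t₀) :=
      (hω.fderiv_right (m := 0) le_rfl).continuousAt
    refine (isLittleO_clm_apply _ ?_).trans_isBigO hO
    exact tendsto_sub_nhds_zero_iff.2 (hfd.tendsto.comp hc)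
  have hincr : (fun p => (ω (c' p) - ω (c p)) p.1) =o[𝓝 (0, t₀)] Prod.fst := by
    refine isLittleO_clm_apply _ ?_
    simpa using (hω.continuousAt.tendsto.comp hc').sub (hω.continuousAt.tendsto.comp hc)
  have hbase := ((ContinuousLinearMap.apply ℝ 𝔸 (x - q)).isBigO_comp _ _).trans_isLittleO
    (hstrict.sub hvary)
  refine (hbase.add hincr).congr_left fun p => ?_
  have hx : x + p.1 - q = (x - q) + p.1 := by abel
  simp only [radialCoeff, hx, c, c', ContinuousLinearMap.apply_apply, map_add, map_smul,
    sub_apply, smul_apply, smul_sub]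
  abel

lemma hasDerivAt_one_add_smul_apply_lineMap {t : ℝ} (hω : DifferentiableAt ℝ ω (lineMap q x t))
    (h : E) :
    HasDerivAt (fun s => 1 + s • ω (lineMap q x s) h)
      (ω (lineMap q x t) h + t • fderiv ℝ ω (lineMap q x t) (x - q) h) t := by
  have hωc :
      HasDerivAt (fun s => ω (lineMap q x s) h) (fderiv ℝ ω (lineMap q x t) (x - q) h) t := by
    simpa using (hω.hasFDerivAt.comp_hasDerivAt t hasDerivAt_lineMap).clm_apply
      (hasDerivAt_const t h)
  refine (((hasDerivAt_id t).smul hωc).const_add 1).congr_deriv ?_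
  simp [add_comm]

/-- The error with which `s ↦ f s * (1 + s • ω (lineMap q x s) h)` solves the equation
`g' = g a'` along the segment from `q` to `x + h`, divided by `f`, where `f` solves `f' = f a`
along the segment from `q` to `x`. -/
def radialDefect (ω : E → E →L[ℝ] 𝔸) (q x h : E) (t : ℝ) : 𝔸 :=
  radialCoeff ω q x t * (1 + t • ω (lineMap q x t) h)
    + (ω (lineMap q x t) h + t • fderiv ℝ ω (lineMap q x t) (x - q) h)
    - (1 + t • ω (lineMap q x t) h) * radialCoeff ω q (x + h) t

lemma isLittleO_radialDefect {t₀ : ℝ} (hω : ContDiffAt ℝ 1 ω (lineMap q x t₀))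
    (hflat : ∀ᶠ z in 𝓝 (lineMap q x t₀), IsFlatFormAt ω z) :
    (fun p : E × ℝ => radialDefect ω q x p.1 p.2) =o[𝓝 (0, t₀)] Prod.fst := by
  set c : E × ℝ → E := fun p => lineMap q x p.2
  have hc : Tendsto c (𝓝 (0, t₀)) (𝓝 (lineMap q x t₀)) := by
    have : Continuous c := by fun_prop
    exact this.tendsto' _ _ rfl
  have hωc : Tendsto (fun p => ω (c p)) (𝓝 (0, t₀)) (𝓝 (ω (lineMap q x t₀))) :=
    hω.continuousAt.tendsto.comp hc
  have hdωc : Tendsto (fun p => fderiv ℝ ω (c p)) (𝓝 (0, t₀)) (𝓝 (fderiv ℝ ω (lineMap q x t₀))) :=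
    (hω.fderiv_right (m := 0) le_rfl).continuousAt.tendsto.comp hc
  have hfst : Tendsto Prod.fst (𝓝 ((0 : E), t₀)) (𝓝 0) := continuous_fst.tendsto _
  have hsnd : Tendsto Prod.snd (𝓝 ((0 : E), t₀)) (𝓝 t₀) := continuous_snd.tendsto _
  have hgauge : Tendsto (fun p : E × ℝ => p.2 • ω (c p) p.1) (𝓝 (0, t₀)) (𝓝 0) := by
    simpa using hsnd.smul ((isBigO_clm_apply _ hωc).trans_tendsto hfst)
  have hfirst : (fun p : E × ℝ => ω (c p) p.1 + p.2 • fderiv ℝ ω (c p) p.1 (x - q))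
      =O[𝓝 (0, t₀)] Prod.fst := by
    have hdO : (fun p : E × ℝ => fderiv ℝ ω (c p) p.1 (x - q)) =O[𝓝 (0, t₀)] Prod.fst :=
      ((ContinuousLinearMap.apply ℝ 𝔸 (x - q)).isBigO_comp _ _).trans (isBigO_clm_apply _ hdωc)
    refine (isBigO_clm_apply _ hωc).add ?_
    simpa using! (hsnd.isBigO_one ℝ).smul hdO
  have hquad := ((isLittleO_one_iff ℝ).2 hgauge).mul_isBigO hfirst.norm_right
  have hrem := (hgauge.const_add (1 : 𝔸)).isBigO_one ℝ
    |>.mul_isLittleO (isLittleO_radialCoeff_add hω).norm_right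
  simp only [one_mul] at hquad hrem
  refine (isLittleO_norm_right.1 (hquad.add hrem).neg_left).congr' ?_ .rfl
  filter_upwards [hc.eventually hflat] with p hp
  -- Flatness cancels the terms of first order.
  have hcurv := hp (x - q) p.1
  rw [sub_eq_iff_eq_add] at hcurv
  simp only [radialDefect, c, hcurv]
  simp only [radialCoeff, smul_add, smul_sub, mul_add, add_mul, mul_sub, mul_one, one_mul,
    smul_mul_assoc, mul_smul_comm]
  abel

lemma norm_sub_le_gronwallBound_of_radialDefect {f₁ f₂ : ℝ → 𝔸} {h : E} {K B ε : ℝ}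
    (hω : ∀ t ∈ Icc (0 : ℝ) 1, DifferentiableAt ℝ ω (lineMap q x t))
    (hf₁ : ∀ t ∈ Icc (0 : ℝ) 1,
      HasDerivWithinAt f₁ (f₁ t * radialCoeff ω q x t) (Icc 0 1) t)
    (hf₂ : ∀ t ∈ Icc (0 : ℝ) 1,
      HasDerivWithinAt f₂ (f₂ t * radialCoeff ω q (x + h) t) (Icc 0 1) t)
    (h₀ : f₂ 0 = f₁ 0) (hK : ∀ t ∈ Icc (0 : ℝ) 1, ‖radialCoeff ω q (x + h) t‖ ≤ K)
    (hB : ∀ t ∈ Icc (0 : ℝ) 1, ‖f₁ t‖ ≤ B)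
    (hε : ∀ t ∈ Icc (0 : ℝ) 1, ‖radialDefect ω q x h t‖ ≤ ε) :
    ‖f₂ 1 - f₁ 1 - f₁ 1 * ω x h‖ ≤ gronwallBound 0 K (B * ε) 1 := by
  have hg : ∀ t ∈ Icc (0 : ℝ) 1, HasDerivWithinAt
      (fun s => f₁ s * (1 + s • ω (lineMap q x s) h)) _ (Icc 0 1) t := fun t ht =>
    (hf₁ t ht).mul (hasDerivAt_one_add_smul_apply_lineMap (hω t ht) h).hasDerivWithinAt
  have hbound := norm_sub_le_gronwallBound_of_mul (ε := B * ε) hK hf₂ hg (fun t ht => ?_)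
    (by simp [h₀])
  · rw [norm_sub_rev] at hbound
    simpa [mul_add, sub_sub] using hbound
  · calc _ = ‖f₁ t * radialDefect ω q x h t‖ := by
          simp only [radialDefect]; congr 1; noncomm_ring
      _ ≤ ‖f₁ t‖ * ‖radialDefect ω q x h t‖ := norm_mul_le _ _
      _ ≤ B * ε := mul_le_mul (hB t ht) (hε t ht) (norm_nonneg _) ((norm_nonneg _).trans (hB t ht))

lemma gronwallBound_zero_eq_mul (K ε t : ℝ) :
    gronwallBound 0 K ε t = ε * gronwallBound 0 K 1 t := by
  unfold gronwallBound
  split_ifs <;> ring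

lemma isParallelFrameAt_of_radial_ode {f : E → ℝ → 𝔸} {K : ℝ} {c : 𝔸}
    (hω : ∀ t ∈ Icc (0 : ℝ) 1, ContDiffAt ℝ 1 ω (lineMap q x t))
    (hflat : ∀ t ∈ Icc (0 : ℝ) 1, ∀ᶠ z in 𝓝 (lineMap q x t), IsFlatFormAt ω z)
    (hK : ∀ᶠ y in 𝓝 x, ∀ t ∈ Icc (0 : ℝ) 1, ‖radialCoeff ω q y t‖ ≤ K)
    (hf₀ : ∀ᶠ y in 𝓝 x, f y 0 = c)
    (hf : ∀ᶠ y in 𝓝 x, ∀ t ∈ Icc (0 : ℝ) 1,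
      HasDerivWithinAt (f y) (f y t * radialCoeff ω q y t) (Icc 0 1) t) :
    IsParallelFrameAt ω (fun y => f y 1) x := by
  have hfx := hf.self_of_nhds
  obtain ⟨B, hB⟩ := isCompact_Icc.exists_bound_of_continuousOn
    fun t ht => (hfx t ht).continuousWithinAt
  have hshift : Tendsto (x + ·) (𝓝 0) (𝓝 x) := by
    simpa using (continuous_const_add x).tendsto 0
  rw [IsParallelFrameAt, hasFDerivAt_iff_isLittleO_nhds_zero, isLittleO_iff]
  intro η hη
  obtain ⟨ε, hε, hεη⟩ := exists_pos_mul_lt hη (B * gronwallBound 0 K 1 1)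
  have hdefect : ∀ᶠ h in 𝓝 (0 : E), ∀ t ∈ Icc (0 : ℝ) 1, ‖radialDefect ω q x h t‖ ≤ ε * ‖h‖ :=
    isCompact_Icc.eventually_forall_of_forall_eventually fun t ht =>
      (isLittleO_radialDefect (hω t ht) (hflat t ht)).def hε
  filter_upwards [hdefect, hshift.eventually hK, hshift.eventually hf₀, hshift.eventually hf]
    with h hdefect hK hf₀' hf
  calc ‖f (x + h) 1 - f x 1 - f x 1 * ω x h‖ ≤ gronwallBound 0 K (B * (ε * ‖h‖)) 1 :=
        norm_sub_le_gronwallBound_of_radialDefect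
          (fun t ht => (hω t ht).differentiableAt one_ne_zero) hfx hf
          (hf₀'.trans hf₀.self_of_nhds.symm) hK hB hdefect
    _ = B * gronwallBound 0 K 1 1 * ε * ‖h‖ := by rw [gronwallBound_zero_eq_mul]; ring
    _ ≤ η * ‖h‖ := by gcongr

end RadialTransport

section LocalFrame

open Set Filter Topology AffineMap

variable {E 𝔸 : Type*} [NormedAddCommGroup E] [NormedSpace ℝ E]
  [NormedRing 𝔸] [NormedAlgebra ℝ 𝔸]
  {ω : E → E →L[ℝ] 𝔸} {U : Set E} {q : E}

lemma exists_ball_norm_radialCoeff_le (hU : U ∈ 𝓝 q) (hω : ContinuousAt ω q) :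
    ∃ r > 0, Metric.ball q r ⊆ U ∧
      ∀ x ∈ Metric.ball q r, ∀ t ∈ Icc (0 : ℝ) 1, ‖radialCoeff ω q x t‖ ≤ 1 / 2 := by
  have hnorm : ∀ᶠ z in 𝓝 q, ‖ω z‖ < ‖ω q‖ + 1 :=
    hω.norm.eventually_lt_const (lt_add_one _)
  have hsmall : ∀ᶠ z in 𝓝 q, (‖ω q‖ + 1) * ‖z - q‖ < 1 / 2 := by
    have : ContinuousAt (fun z => (‖ω q‖ + 1) * ‖z - q‖) q := by fun_prop
    exact this.eventually_lt_const (by simp)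
  obtain ⟨r, hr, hball⟩ := Metric.nhds_basis_ball.eventually_iff.1
    ((hnorm.and hsmall).and hU)
  refine ⟨r, hr, fun x hx => (hball hx).2, fun x hx t ht => ?_⟩
  have hseg : lineMap q x t ∈ Metric.ball q r :=
    (convex_ball q r).lineMap_mem (Metric.mem_ball_self hr) hx ht
  calc ‖radialCoeff ω q x t‖ ≤ ‖ω (lineMap q x t)‖ * ‖x - q‖ :=
        (ω (lineMap q x t)).le_opNorm _
    _ ≤ (‖ω q‖ + 1) * ‖x - q‖ := by gcongr; exact (hball hseg).1.1.le
    _ ≤ 1 / 2 := (hball hx).1.2.le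

variable [CompleteSpace 𝔸]

lemma exists_isParallelFrameAt_eventually (hU : IsOpen U) (hω : ContDiffOn ℝ 1 ω U)
    (hflat : ∀ x ∈ U, IsFlatFormAt ω x) (hq : q ∈ U) :
    ∃ F : E → 𝔸, F q = 1 ∧ ∀ᶠ x in 𝓝 q, IsParallelFrameAt ω F x := by
  obtain ⟨r, hr, hrU, hbound⟩ := exists_ball_norm_radialCoeff_le (hU.mem_nhds hq)
    (hω.continuousOn.continuousAt (hU.mem_nhds hq))
  have hseg : ∀ x ∈ Metric.ball q r, ∀ t ∈ Icc (0 : ℝ) 1, lineMap q x t ∈ U := fun x hx t ht =>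
    hrU ((convex_ball q r).lineMap_mem (Metric.mem_ball_self hr) hx ht)
  have hcont : ∀ x ∈ Metric.ball q r, ContinuousOn (radialCoeff ω q x) (Icc 0 1) := fun x hx =>
    (hω.continuousOn.comp lineMap_continuous.continuousOn (hseg x hx)).clm_apply
      continuousOn_const
  have hode : ∀ x ∈ Metric.ball q r, ∃ f : ℝ → 𝔸, f 0 = 1 ∧ ∀ t ∈ Icc (0 : ℝ) 1,
      HasDerivWithinAt f (f t * radialCoeff ω q x t) (Icc 0 1) t := fun x hx =>
    exists_hasDerivWithinAt_mul (hcont x hx) (hbound x hx) 1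
  choose! f hf₀ hf using hode
  refine ⟨fun x => f x 1, ?_, ?_⟩
  · have hq' := Metric.mem_ball_self (x := q) hr
    refine (constant_of_derivWithin_zero (fun t ht => (hf q hq' t ht).differentiableWithinAt)
      (fun t ht => ?_) 1 (by simp)).trans (hf₀ q hq')
    have ht' := Ico_subset_Icc_self ht
    exact ((hf q hq' t ht').derivWithin (uniqueDiffOn_Icc_zero_one t ht')).trans
      (by simp [radialCoeff])
  · filter_upwards [Metric.ball_mem_nhds q hr] with x hx
    have hnear : ∀ᶠ y in 𝓝 x, y ∈ Metric.ball q r := Metric.isOpen_ball.mem_nhds hx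
    exact isParallelFrameAt_of_radial_ode
      (fun t ht => hω.contDiffAt (hU.mem_nhds (hseg x hx t ht)))
      (fun t ht => (hU.eventually_mem (hseg x hx t ht)).mono hflat)
      (hnear.mono hbound) (hnear.mono hf₀) (hnear.mono hf)

lemma exists_units_isParallelFrameAt_eventually (hU : IsOpen U) (hω : ContDiffOn ℝ 1 ω U)
    (hflat : ∀ x ∈ U, IsFlatFormAt ω x) (hq : q ∈ U) :
    ∃ Φ : E → 𝔸ˣ, ∀ᶠ x in 𝓝 q, IsParallelFrameAt ω (fun y => (Φ y : 𝔸)) x := by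
  obtain ⟨F, hFq, hF⟩ := exists_isParallelFrameAt_eventually hU hω hflat hq
  have hunit : ∀ᶠ x in 𝓝 q, IsUnit (F x) :=
    hF.self_of_nhds.hasFDerivAt.continuousAt.eventually
      (Units.isOpen.mem_nhds (by simp [hFq]))
  choose! Φ hΦ using show ∀ x, IsUnit (F x) → ∃ u : 𝔸ˣ, (u : 𝔸) = F x from fun x hx => hx
  refine ⟨Φ, ?_⟩
  filter_upwards [hF, hunit.eventually_nhds] with x hx hux
  have heq : (fun y => (Φ y : 𝔸)) =ᶠ[𝓝 x] F := hux.mono hΦ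
  exact hx.congr heq

end LocalFrame

section Gluing

open Set Filter Topology

variable {X ι G : Type*} [TopologicalSpace X] [Group G] {V : ι → Set X} {Φ : ι → X → G}

/-- The local system of the functions which near each point of `V i` are left translates of `Φ i`,
as a bundle with discrete fibre: in the chart over `V i`, the function `y ↦ c * Φ i y` has
coordinate `c`. -/
def translateCore [TopologicalSpace G] [DiscreteTopology G] (hV : ∀ i, IsOpen (V i))
    (indexAt : X → ι) (hindex : ∀ x, x ∈ V (indexAt x))
    (hΦ : ∀ i j, ∀ x ∈ V i ∩ V j, ∃ c, Φ i =ᶠ[𝓝 x] fun y => c * Φ j y) :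
    FiberBundleCore ι X G where
  baseSet := V
  isOpen_baseSet := hV
  indexAt := indexAt
  mem_baseSet_at := hindex
  coordChange i j x g := g * (Φ i x * (Φ j x)⁻¹)
  coordChange_self := by simp
  continuousOn_coordChange i j := by
    rintro ⟨x, g⟩ ⟨hx, -⟩
    obtain ⟨c, hc⟩ := hΦ i j x hx
    have hmul : ContinuousAt (fun p : X × G => p.2 * c) (x, g) :=
      (continuous_of_discreteTopology (f := (· * c))).continuousAt.comp continuousAt_snd
    refine (hmul.congr ?_).continuousWithinAt
    filter_upwards [continuousAt_fst.eventually hc] with p hp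
    simp [hp]
  coordChange_comp := by simp [mul_assoc]

/-- The section of the covering space `translateCore` through a prescribed point gives the function
`F`. -/
lemma exists_eventuallyEq_const_mul_of_simplyConnectedSpace [SimplyConnectedSpace X]
    [LocallyPathConnectedSpace X] (hV : ∀ i, IsOpen (V i)) (hcover : ∀ x, ∃ i, x ∈ V i)
    (hΦ : ∀ i j, ∀ x ∈ V i ∩ V j, ∃ c, Φ i =ᶠ[𝓝 x] fun y => c * Φ j y) (p : X) (g : G) :
    ∃ F : X → G, F p = g ∧ ∀ i, ∀ x ∈ V i, ∃ c, F =ᶠ[𝓝 x] fun y => c * Φ i y := by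
  let _ : TopologicalSpace G := ⊥
  have _ : DiscreteTopology G := ⟨rfl⟩
  choose indexAt hindex using hcover
  let Z := translateCore hV indexAt hindex hΦ
  have hcov : IsCoveringMap (Bundle.TotalSpace.proj : Bundle.TotalSpace G Z.Fiber → X) :=
    FiberBundle.isCoveringMap
  obtain ⟨s, ⟨hsp, hs⟩, -⟩ := hcov.existsUnique_continuousMap_lifts (ContinuousMap.id X)
    p ⟨p, (g * (Φ (indexAt p) p)⁻¹ : G)⟩ rfl
  have hproj : ∀ x, (s x).1 = x := congrFun hs
  let σ : X → G := fun x => (s x).2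
  have hσp : σ p = g * (Φ (indexAt p) p)⁻¹ := by simp only [σ]; rw [hsp]
  refine ⟨fun x => σ x * Φ (indexAt x) x, by simp [hσp], fun i x hx => ?_⟩
  have htriv : ∀ y, (Z.localTriv i (s y)).2 = σ y * (Φ (indexAt y) y * (Φ i y)⁻¹) := fun y => by
    change σ y * (Φ (indexAt (s y).1) (s y).1 * (Φ i (s y).1)⁻¹) = _
    rw [hproj]
  have hcont : ContinuousAt (fun y => (Z.localTriv i (s y)).2) x := by
    have hsource : s x ∈ (Z.localTriv i).source := by
      rw [FiberBundleCore.mem_localTriv_source, hproj]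
      exact hx
    exact (ContinuousAt.comp (f := s)
      ((Z.localTriv i).toOpenPartialHomeomorph.continuousAt hsource) (s.continuousAt x)).snd
  rw [ContinuousAt, nhds_discrete G, tendsto_pure] at hcont
  refine ⟨(Z.localTriv i (s x)).2, ?_⟩
  filter_upwards [hcont] with y hy
  rw [← hy, htriv]
  group

end Gluing

section GlobalFrame

open Set Filter Topology

variable {E 𝔸 : Type*} [NormedAddCommGroup E] [NormedSpace ℝ E]
  [NormedRing 𝔸] [NormedAlgebra ℝ 𝔸] [CompleteSpace 𝔸] {ω : E → E →L[ℝ] 𝔸}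

theorem exists_units_isParallelFrameAt {U : Set E} [SimplyConnectedSpace U] (hU : IsOpen U)
    (hω : ContDiffOn ℝ 1 ω U) (hflat : ∀ x ∈ U, IsFlatFormAt ω x) {p : E} (hp : p ∈ U) (g : 𝔸ˣ) :
    ∃ F : E → 𝔸ˣ, F p = g ∧ ∀ x ∈ U, IsParallelFrameAt ω (fun y => (F y : 𝔸)) x := by
  have : LocallyPathConnectedSpace U := hU.locallyPathConnectedSpace
  choose Φ hΦ using fun q : U => exists_units_isParallelFrameAt_eventually hU hω hflat q.2
  let V : U → Set U := fun q =>
    Subtype.val ⁻¹' {x | ∀ᶠ y in 𝓝 x, IsParallelFrameAt ω (fun z => (Φ q z : 𝔸)) y}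
  have hV : ∀ q, IsOpen (V q) := fun q =>
    isOpen_setOfPred_eventually_nhds.preimage continuous_subtype_val
  have htrans : ∀ q r, ∀ x ∈ V q ∩ V r,
      ∃ c, (fun y : U => Φ q y) =ᶠ[𝓝 x] fun y : U => c * Φ r y := fun q r x hx => by
    obtain ⟨c, hc⟩ := exists_eventuallyEq_const_mul_of_isParallelFrameAt hx.1 hx.2
    exact ⟨c, continuousAt_subtype_val.eventually hc⟩
  obtain ⟨F, hFp, hF⟩ := exists_eventuallyEq_const_mul_of_simplyConnectedSpace hV
    (fun q => ⟨q, hΦ q⟩) htrans ⟨p, hp⟩ g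
  refine ⟨Function.extend Subtype.val F 1,
    (Subtype.val_injective.extend_apply F 1 ⟨p, hp⟩).trans hFp, fun x hx => ?_⟩
  obtain ⟨c, hc⟩ := hF ⟨x, hx⟩ ⟨x, hx⟩ (hΦ ⟨x, hx⟩)
  refine ((hΦ ⟨x, hx⟩).self_of_nhds.const_mul (c : 𝔸)).congr ?_
  rw [← hU.isOpenEmbedding_subtypeVal.map_nhds_eq ⟨x, hx⟩]
  refine eventually_map.2 (hc.mono fun y hy => ?_)
  simp [hy]

end GlobalFrame

section MatrixValued

open scoped Matrix.Norms.L2Operator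

variable {n : ℕ} {E : Type*} [NormedAddCommGroup E] [NormedSpace ℝ E]
  {F : E → Matrix (Fin n) (Fin n) ℝ}

lemma contDiffOn_matrix_iff {s : Set E} {r : WithTop ℕ∞} :
    ContDiffOn ℝ r F s ↔ ∀ i j, ContDiffOn ℝ r (fun x => F x i j) s := by
  rw [← (Matrix.ofLinearEquiv ℝ).toContinuousLinearEquiv.symm.comp_contDiffOn_iff, contDiffOn_pi]
  exact forall_congr' fun i => contDiffOn_pi

lemma differentiableAt_matrix_iff {x : E} :
    DifferentiableAt ℝ F x ↔ ∀ i j, DifferentiableAt ℝ (fun y => F y i j) x := by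
  rw [← (Matrix.ofLinearEquiv ℝ).toContinuousLinearEquiv.symm.comp_differentiableAt_iff,
    differentiableAt_pi]
  exact forall_congr' fun i => differentiableAt_pi

lemma det_eq_one_of_transpose_mul_self {ι X : Type*} [Fintype ι] [DecidableEq ι]
    [TopologicalSpace X] {F : X → Matrix ι ι ℝ} {s : Set X} (hs : IsPreconnected s)
    (hF : ContinuousOn F s) (horth : ∀ x ∈ s, (F x)ᵀ * F x = 1) {p q : X} (hp : p ∈ s)
    (hdet : (F p).det = 1) (hq : q ∈ s) : (F q).det = 1 := by
  have hsq : ∀ x ∈ s, (F x).det ^ 2 = 1 := fun x hx => by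
    simpa [sq] using congrArg Matrix.det (horth x hx)
  exact hs.eq_of_sq_eq (g := fun _ => (1 : ℝ)) (continuous_id.matrix_det.comp_continuousOn hF)
    continuousOn_const (fun x hx => by simp [hsq x hx]) (by simp) hp hdet hq

end MatrixValued

section ConnectionForm

open Set Filter Topology
open scoped Matrix.Norms.L2Operator

variable {m n : ℕ} {A : Fin m → (Fin m → ℝ) → Matrix (Fin n) (Fin n) ℝ}
  {F : (Fin m → ℝ) → Matrix (Fin n) (Fin n) ℝ} {U : Set (Fin m → ℝ)} {q : Fin m → ℝ}

/-- The matrix-valued 1-form `∑ k, A k dx_k`. -/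
def connectionForm (A : Fin m → (Fin m → ℝ) → Matrix (Fin n) (Fin n) ℝ) (x : Fin m → ℝ) :
    (Fin m → ℝ) →L[ℝ] Matrix (Fin n) (Fin n) ℝ :=
  ∑ k, (ContinuousLinearMap.proj k : (Fin m → ℝ) →L[ℝ] ℝ).smulRight (A k x)

lemma connectionForm_apply (A : Fin m → (Fin m → ℝ) → Matrix (Fin n) (Fin n) ℝ)
    (x v : Fin m → ℝ) : connectionForm A x v = ∑ k, v k • A k x := by
  simp [connectionForm]

lemma connectionForm_single (A : Fin m → (Fin m → ℝ) → Matrix (Fin n) (Fin n) ℝ)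
    (x : Fin m → ℝ) (k : Fin m) : connectionForm A x (Pi.single k 1) = A k x := by
  simp [connectionForm_apply, Pi.single_apply]

lemma pdM_eq_fderiv_single (hF : DifferentiableAt ℝ F q) (k : Fin m) :
    pdM k F q = fderiv ℝ F q (Pi.single k 1) := by
  ext i j
  let entry : Matrix (Fin n) (Fin n) ℝ →L[ℝ] ℝ :=
    (Matrix.entryLinearMap ℝ ℝ i j).toContinuousLinearMap
  have : HasFDerivAt (fun x => F x i j) (entry.comp (fderiv ℝ F q)) q :=
    entry.hasFDerivAt.comp q hF.hasFDerivAt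
  simp [pdM, pdr, this.fderiv, entry]

lemma contDiffOn_connectionForm {r : WithTop ℕ∞} (hA : ∀ k, ContDiffOn ℝ r (A k) U) :
    ContDiffOn ℝ r (connectionForm A) U :=
  ContDiffOn.sum fun k _ => contDiffOn_const.smulRight (hA k)

lemma isParallelFrameAt_connectionForm_iff :
    IsParallelFrameAt (connectionForm A) F q ↔
      DifferentiableAt ℝ F q ∧ ∀ k, pdM k F q = F q * A k q := by
  refine ⟨fun h => ⟨h.hasFDerivAt.differentiableAt, fun k => ?_⟩, fun ⟨hF, h⟩ => ?_⟩
  · rw [pdM_eq_fderiv_single h.hasFDerivAt.differentiableAt, h.hasFDerivAt.fderiv]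
    simp [connectionForm_single]
  · refine hF.hasFDerivAt.congr_fderiv (ContinuousLinearMap.coe_injective
      ((Pi.basisFun ℝ (Fin m)).ext fun k => ?_))
    simp [← pdM_eq_fderiv_single hF, h, connectionForm_single]

lemma isFlatFormAt_connectionForm (hA : ∀ k, DifferentiableAt ℝ (A k) q)
    (hflat : ∀ k l, pdM k (A l) q - pdM l (A k) q = A l q * A k q - A k q * A l q) :
    IsFlatFormAt (connectionForm A) q := by
  have hfderiv : ∀ k l, fderiv ℝ (connectionForm A) q (Pi.single k 1) (Pi.single l 1)
      = pdM k (A l) q := fun k l => by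
    have hconn : DifferentiableAt ℝ (connectionForm A) q :=
      DifferentiableAt.fun_sum fun k _ => (ContinuousLinearMap.smulRightL ℝ (Fin m → ℝ)
        (Matrix (Fin n) (Fin n) ℝ) (.proj k)).differentiableAt.comp q (hA k)
    have := hconn.hasFDerivAt.clm_apply (hasFDerivAt_const (Pi.single l (1 : ℝ)) q)
    simp only [connectionForm_single] at this
    rw [pdM_eq_fderiv_single (hA l), this.fderiv]
    simp
  refine isFlatFormAt_of_basis (Pi.basisFun ℝ (Fin m)) fun k l => ?_
  simpa [hfderiv, connectionForm_single] using hflat k l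

lemma star_connectionForm (hskew : ∀ k, (A k q)ᵀ = -A k q) (v : Fin m → ℝ) :
    star (connectionForm A q v) = -connectionForm A q v := by
  simp [connectionForm_apply, Matrix.star_eq_conjTranspose,
    Matrix.conjTranspose_eq_transpose_of_trivial, hskew]

lemma transpose_mul_self_and_det_of_isParallelFrameAt (hU : IsOpen U) (hUc : IsPreconnected U)
    (hskew : ∀ k, ∀ x ∈ U, (A k x)ᵀ = -A k x)
    (hF : ∀ x ∈ U, IsParallelFrameAt (connectionForm A) F x) {p : Fin m → ℝ} (hp : p ∈ U)
    (hFp : (F p)ᵀ * F p = 1 ∧ (F p).det = 1) (hq : q ∈ U) :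
    (F q)ᵀ * F q = 1 ∧ (F q).det = 1 := by
  have horth : ∀ x ∈ U, (F x)ᵀ * F x = 1 := fun x hx => by
    have hconst := mul_star_eq_of_isParallelFrameAt hU hUc hF
      (fun y hy => star_connectionForm fun k => hskew k y hy) hx hp
    simp only [Matrix.star_eq_conjTranspose, Matrix.conjTranspose_eq_transpose_of_trivial]
      at hconst
    exact mul_eq_one_comm.1 (hconst.trans (mul_eq_one_comm.1 hFp.1))
  have hcont : ContinuousOn F U := fun x hx =>
    (hF x hx).hasFDerivAt.continuousAt.continuousWithinAt
  exact ⟨horth q hq, det_eq_one_of_transpose_mul_self hUc hcont horth hp hFp.2 hq⟩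

theorem exists_unique_frame_flat_connection_general {r : ℕ∞} (hr : 1 ≤ r) (hU : IsOpen U)
    [SimplyConnectedSpace U] (hA : ∀ k i j, ContDiffOn ℝ r (fun q => A k q i j) U)
    (hskew : ∀ k, ∀ q ∈ U, (A k q)ᵀ = -(A k q))
    (hflat : ∀ k l, ∀ q ∈ U,
      pdM k (A l) q - pdM l (A k) q = A l q * A k q - A k q * A l q)
    {p₀ : Fin m → ℝ} (hp₀ : p₀ ∈ U) {F₀ : Matrix (Fin n) (Fin n) ℝ}
    (hF₀ : F₀ᵀ * F₀ = 1 ∧ F₀.det = 1) :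
    ∃ F : (Fin m → ℝ) → Matrix (Fin n) (Fin n) ℝ,
      (∀ i j, ContDiffOn ℝ (r + 1) (fun q => F q i j) U) ∧
      F p₀ = F₀ ∧
      (∀ q ∈ U, (F q)ᵀ * F q = 1 ∧ (F q).det = 1) ∧
      (∀ k, ∀ q ∈ U, pdM k F q = F q * A k q) ∧
      (∀ G : (Fin m → ℝ) → Matrix (Fin n) (Fin n) ℝ,
        (∀ i j, DifferentiableOn ℝ (fun q => G q i j) U) →
        G p₀ = F₀ →
        (∀ k, ∀ q ∈ U, pdM k G q = G q * A k q) →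
        Set.EqOn F G U) := by
  have hUc : IsPreconnected U := isPreconnected_iff_preconnectedSpace.2 inferInstance
  have hA' : ∀ k, ContDiffOn ℝ r (A k) U := fun k => contDiffOn_matrix_iff.2 (hA k)
  have hr' : (r : WithTop ℕ∞) ≠ 0 := by
    exact_mod_cast (one_pos.trans_le hr).ne'
  have hω : ContDiffOn ℝ r (connectionForm A) U := contDiffOn_connectionForm hA'
  have hωflat : ∀ x ∈ U, IsFlatFormAt (connectionForm A) x := fun x hx =>
    isFlatFormAt_connectionForm
      (fun k => ((hA' k).contDiffAt (hU.mem_nhds hx)).differentiableAt hr')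
      fun k l => hflat k l x hx
  obtain ⟨F, hFp, hF⟩ := exists_units_isParallelFrameAt hU (hω.of_le (by exact_mod_cast hr))
    hωflat hp₀ ⟨F₀, F₀ᵀ, mul_eq_one_comm.1 hF₀.1, hF₀.1⟩
  have hFp : (F p₀ : Matrix (Fin n) (Fin n) ℝ) = F₀ := by rw [hFp]
  have hFr := contDiffOn_of_isParallelFrameAt hU hF hω
  refine ⟨fun q => F q, contDiffOn_matrix_iff.1 hFr, hFp, fun q hq => ?_,
    fun k q hq => (isParallelFrameAt_connectionForm_iff.1 (hF q hq)).2 k, fun G hG hGp hdG => ?_⟩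
  · exact transpose_mul_self_and_det_of_isParallelFrameAt hU hUc hskew hF hp₀ (hFp.symm ▸ hF₀) hq
  · have hGpar : ∀ x ∈ U, IsParallelFrameAt (connectionForm A) G x := fun x hx =>
      isParallelFrameAt_connectionForm_iff.2 ⟨differentiableAt_matrix_iff.2 fun i j =>
        (hG i j).differentiableAt (hU.mem_nhds hx), fun k => hdG k x hx⟩
    intro x hx
    simpa [hGp, ← hFp] using (eqOn_of_isParallelFrameAt hU hUc hGpar hF hp₀ hx).symm

end ConnectionForm

/-- Integration of flat skew-symmetric connection forms over a simply connected domain: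
given smooth skew-symmetric `A_1, …, A_m` with `∂_k A_l − ∂_l A_k = A_l A_k − A_k A_l`,
for every initial condition `F(p₀) = F₀ ∈ SO(n)` there is a unique smooth
`F : U → SO(n)` with `∂_k F = F A_k`. -/
theorem exists_unique_frame_flat_connection {m n : ℕ} (hn : 1 ≤ n)
    (U : Set (Fin m → ℝ)) (hU : IsOpen U)
    (hconn : IsConnected U) (hsc : SimplyConnectedSpace U)
    (A : Fin m → (Fin m → ℝ) → Matrix (Fin n) (Fin n) ℝ)
    (hA : ∀ k i j, ContDiffOn ℝ (⊤ : ℕ∞) (fun q => A k q i j) U)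
    (hskew : ∀ k, ∀ q ∈ U, (A k q)ᵀ = -(A k q))
    (hflat : ∀ k l, ∀ q ∈ U,
      pdM k (A l) q - pdM l (A k) q = A l q * A k q - A k q * A l q)
    (p₀ : Fin m → ℝ) (hp₀ : p₀ ∈ U)
    (F₀ : Matrix (Fin n) (Fin n) ℝ) (hF₀ : F₀ᵀ * F₀ = 1 ∧ F₀.det = 1) :
    ∃ F : (Fin m → ℝ) → Matrix (Fin n) (Fin n) ℝ,
      (∀ i j, ContDiffOn ℝ (⊤ : ℕ∞) (fun q => F q i j) U) ∧
      F p₀ = F₀ ∧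
      (∀ q ∈ U, (F q)ᵀ * F q = 1 ∧ (F q).det = 1) ∧
      (∀ k, ∀ q ∈ U, pdM k F q = F q * A k q) ∧
      (∀ G : (Fin m → ℝ) → Matrix (Fin n) (Fin n) ℝ,
        (∀ i j, ContDiffOn ℝ (⊤ : ℕ∞) (fun q => G q i j) U) →
        G p₀ = F₀ →
        (∀ q ∈ U, (G q)ᵀ * G q = 1 ∧ (G q).det = 1) →
        (∀ k, ∀ q ∈ U, pdM k G q = G q * A k q) →
        Set.EqOn F G U) := by
  obtain ⟨F, hF, hFp₀, hSO, hdF, huniq⟩ :=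
    exists_unique_frame_flat_connection_general (r := ⊤) le_top hU hA hskew hflat hp₀ hF₀
  exact ⟨F, fun i j => (hF i j).of_le le_self_add, hFp₀, hSO, hdF, fun G hG hGp₀ _ hdG =>
    huniq G (fun i j => (hG i j).differentiableOn (by simp)) hGp₀ hdG⟩
end
end

section
/- Let m ≥ 2, let U ⊆ ℝ^m be open, let (f, ν) be a front on U with values in ℝ^{m+1}, and let p ∈ U be an A₂-point of f. Suppose there is an open neighborhood V ⊆ U of p on which K^ext does not change sign, i.e. either K^ext(X, Y)(q) ≥ 0 for all q ∈ V∖Σ and all linearly independent X, Y ∈ ℝ^m, or K^ext(X, Y)(q) ≤ 0 for all such q, X, Y. Then K^ext is bounded near p: there exist an open neighborhood W ⊆ V of p and a constant C > 0 such that |K^ext(X, Y)(q)| ≤ C for all q ∈ W∖Σ and all linearly independent X, Y ∈ ℝ^m. -/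
open scoped Matrix

noncomputable section

/-- Partial derivative of a vector-valued map in the `k`-th coordinate direction. -/
def pd {m N : ℕ} (k : Fin m) (f : (Fin m → ℝ) → (Fin N → ℝ)) :
    (Fin m → ℝ) → (Fin N → ℝ) :=
  fun q => fderiv ℝ f q (Pi.single k 1)

/-- The Jacobian function `λ(q) = det(∂_1 f, …, ∂_m f, ν)` of a frontal `(f, ν)`. -/
def lamb {m : ℕ} (f ν : (Fin m → ℝ) → (Fin (m + 1) → ℝ)) (q : Fin m → ℝ) : ℝ :=
  Matrix.det (Matrix.of (Fin.snoc (fun k : Fin m => pd k f q) (ν q)))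

/-- `p` is an `A₂`-point of the frontal `(f, ν)`: a nondegenerate singular point at which
the null direction is transversal to the singular hypersurface, i.e. `dλ_p(η) ≠ 0` for
(any) nonzero null vector `η`. -/
def IsA2 {m : ℕ} (f ν : (Fin m → ℝ) → (Fin (m + 1) → ℝ)) (p : Fin m → ℝ) : Prop :=
  lamb f ν p = 0 ∧ fderiv ℝ (lamb f ν) p ≠ 0 ∧
  ∀ X : Fin m → ℝ, X ≠ 0 → fderiv ℝ f p X = 0 → fderiv ℝ (lamb f ν) p X ≠ 0

/-- The extrinsic curvature `K^ext(X ∧ Y) = (II(X,X)II(Y,Y) − II(X,Y)²)/(I(X,X)I(Y,Y) − I(X,Y)²)`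
of the plane spanned by `X, Y` at `q`, where `I(X,Y) = ⟨df X, df Y⟩` and
`II(X,Y) = −⟨df X, dν Y⟩`. -/
def Kext {m : ℕ} (f ν : (Fin m → ℝ) → (Fin (m + 1) → ℝ)) (q : Fin m → ℝ)
    (X Y : Fin m → ℝ) : ℝ :=
  ((fderiv ℝ f q X ⬝ᵥ fderiv ℝ ν q X) * (fderiv ℝ f q Y ⬝ᵥ fderiv ℝ ν q Y)
      - (fderiv ℝ f q X ⬝ᵥ fderiv ℝ ν q Y) ^ 2) /
    ((fderiv ℝ f q X ⬝ᵥ fderiv ℝ f q X) * (fderiv ℝ f q Y ⬝ᵥ fderiv ℝ f q Y)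
      - (fderiv ℝ f q X ⬝ᵥ fderiv ℝ f q Y) ^ 2)

/-!
The adjugate of the matrix with rows `∂_1 f, …, ∂_m f, ν` provides a left inverse `A` of `df` up
to the factor `λ`, so `λ II` extends across the singular set to a smooth bilinear form `B` on the
ambient space: `B(df X, df Y) = λ II(X, Y)` and `λ B(w, w') = II(A w, A w')`. As the adjugate of a
singular matrix has rank at most one, the `2 × 2` Gram minors of `B` vanish on the singular set.
By the second identity, a one-sided bound on `K^ext` makes these minors, up to sign and a multiple
of `λ²`, nonnegative.

A nonnegative `C²` function vanishing on the zero set of a submersion `λ` is `O(λ²)`: project the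
point onto the zero set, moving it by `O(λ)`, and Taylor expand at the projection, where the
function has a local minimum. Applied to the minors of `B`, uniformly over unit vectors, this gives
`λ² |II-minor| ≤ C λ²` on `I`-orthonormal pairs.
-/

open Asymptotics Filter Topology
open LinearMap (BilinForm)

section Analysis

open Metric

variable {E F : Type*} [NormedAddCommGroup E] [NormedSpace ℝ E]
  [NormedAddCommGroup F] [NormedSpace ℝ F]

lemma isBigO_sub_sub_fderiv_sq {f : E → F} {p : E} (hf : ContDiffAt ℝ 2 f p) :
    (fun x : E × E => f x.2 - f x.1 - fderiv ℝ f x.1 (x.2 - x.1))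
      =O[𝓝 (p, p)] fun x => ‖x.2 - x.1‖ ^ 2 := by
  obtain ⟨K, s, hs, hK⟩ :=
    (hf.fderiv_right (m := 1) (by norm_num)).exists_lipschitzOnWith
  have hdiff : ∀ᶠ x in 𝓝 p, DifferentiableAt ℝ f x :=
    (hf.eventually (by simp)).mono fun x hx => hx.differentiableAt (by simp)
  obtain ⟨r, hr, hball⟩ := Metric.mem_nhds_iff.1 (inter_mem hs hdiff)
  refine .of_bound K ?_
  filter_upwards [prod_mem_nhds (ball_mem_nhds p hr) (ball_mem_nhds p hr)]
    with x ⟨hx₁, hx₂⟩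
  have hseg : segment ℝ x.1 x.2 ⊆ ball p r := (convex_ball p r).segment_subset hx₁ hx₂
  have hderiv : ∀ y ∈ segment ℝ x.1 x.2,
      ‖fderiv ℝ f y - fderiv ℝ f x.1‖ ≤ K * ‖x.2 - x.1‖ := fun y hy =>
    (hK.norm_sub_le (hball (hseg hy)).1 (hball hx₁).1).trans <|
      mul_le_mul_of_nonneg_left (norm_sub_le_of_mem_segment hy) K.2
  have := (convex_segment x.1 x.2).norm_image_sub_le_of_norm_hasFDerivWithin_le'
    (fun y hy => (hball (hseg hy)).2.hasFDerivAt.hasFDerivWithinAt) hderiv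
    (left_mem_segment ℝ _ _) (right_mem_segment ℝ _ _)
  rwa [norm_pow, norm_norm, sq, ← mul_assoc]

lemma exists_approx_projection_onto_fiber [CompleteSpace E] [CompleteSpace F]
    {f : E → F} {f' : E →L[ℝ] F} {p : E} (hf : HasStrictFDerivAt f f' p)
    (hf' : f'.range = ⊤) :
    ∃ π : E → E, (∀ᶠ q in 𝓝 p, f (π q) = f p) ∧
      (fun q => π q - q) =O[𝓝 p] fun q => f q - f p := by
  obtain ⟨g, hg⟩ := f'.exists_nonlinearRightInverse_of_surjective hf'
  have hc : 0 < g.nnnorm⁻¹ / 2 := by positivity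
  obtain ⟨s, hs, happrox⟩ := hf.approximates_deriv_on_nhds (Or.inr hc)
  obtain ⟨r, hr, hball⟩ := Metric.mem_nhds_iff.1 hs
  have hsurj : ∀ᶠ q in 𝓝 p, ∃ x, f x = f p ∧ ‖x - q‖ ≤ 2 * g.nnnorm * ‖f q - f p‖ := by
    have hlim : Tendsto (fun q => 2 * g.nnnorm * ‖f q - f p‖) (𝓝 p) (𝓝 0) := by
      have := hf.continuousAt.tendsto.sub_const (f p)
      simpa using this.norm.const_mul (2 * (g.nnnorm : ℝ))
    filter_upwards [ball_mem_nhds p (half_pos hr), hlim.eventually_lt_const (half_pos hr)]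
      with q hq hqr
    have hsub : closedBall q (2 * g.nnnorm * ‖f q - f p‖) ⊆ s :=
      (closedBall_subset_ball' (by linarith [mem_ball.1 hq])).trans hball
    obtain ⟨x, hx, hfx⟩ := happrox.surjOn_closedBall_of_nonlinearRightInverse g
      (by positivity) hsub (show f p ∈ _ by
        rw [mem_closedBall, dist_comm, dist_eq_norm]
        refine le_of_eq ?_
        push_cast
        field_simp
        norm_num)
    exact ⟨x, hfx, by simpa only [mem_closedBall, dist_eq_norm] using hx⟩
  obtain ⟨π, hπ⟩ := hsurj.choice
  exact ⟨π, hπ.mono fun _ h => h.1, .of_bound _ (hπ.mono fun _ h => h.2)⟩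

lemma isBigO_sq_of_nonneg_of_eq_zero [CompleteSpace E] {g l : E → ℝ} {l' : E →L[ℝ] ℝ} {p : E}
    (hg : ContDiffAt ℝ 2 g p) (hl : HasStrictFDerivAt l l' p) (hl' : l' ≠ 0) (hlp : l p = 0)
    (hnonneg : ∀ᶠ q in 𝓝 p, 0 ≤ g q) (hzero : ∀ᶠ q in 𝓝 p, l q = 0 → g q = 0) :
    g =O[𝓝 p] fun q => l q ^ 2 := by
  obtain ⟨π, hlπ, hπ⟩ := exists_approx_projection_onto_fiber hl
    (Module.Dual.range_eq_top_of_ne_zero fun h =>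
      hl' (ContinuousLinearMap.coe_injective h))
  simp only [hlp, sub_zero] at hlπ hπ
  have hπp : Tendsto π (𝓝 p) (𝓝 p) := by
    have hl0 : Tendsto l (𝓝 p) (𝓝 0) := hlp ▸ hl.continuousAt
    simpa using (hπ.trans_tendsto hl0).add tendsto_id
  have htaylor := (isBigO_sub_sub_fderiv_sq hg).comp_tendsto (hπp.prodMk_nhds tendsto_id)
  have hcrit : ∀ᶠ q in 𝓝 p, g (π q) = 0 ∧ fderiv ℝ g (π q) = 0 := by
    filter_upwards [hlπ, hπp.eventually hzero,
      hπp.eventually (eventually_eventually_nhds.2 hnonneg)] with q hlq hzq hmin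
    have hgq : g (π q) = 0 := hzq hlq
    exact ⟨hgq, IsLocalMin.fderiv_eq_zero (hmin.mono fun x hx => hgq.trans_le hx)⟩
  have hgπ : g =O[𝓝 p] fun q => ‖π q - q‖ ^ 2 := by
    refine (htaylor.congr' (hcrit.mono fun q ⟨h₀, h₁⟩ => ?_) (.of_forall fun q => ?_))
    · simp [h₀, h₁]
    · simp [norm_sub_rev]
  exact hgπ.trans (hπ.norm_left.pow 2)

lemma isBigO_prod_principal_of_isCompact {α X Y Z : Type*} [TopologicalSpace X] [Norm Y]
    [SeminormedAddCommGroup Z] {l : Filter α} {K : Set X} (hK : IsCompact K)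
    {G : α × X → Y} {H : α × X → Z} (h : ∀ z ∈ K, G =O[l ×ˢ 𝓝[K] z] H) :
    G =O[l ×ˢ 𝓟 K] H := by
  refine hK.induction_on (p := fun t => G =O[l ×ˢ 𝓟 t] H) (by simp)
    (fun s t hst ht => ht.mono (prod_mono_right l (principal_mono.2 hst)))
    (fun s t hs ht => ?_) fun z hz => ?_
  · rw [← sup_principal, prod_sup]
    exact hs.sup ht
  · obtain ⟨C, hC⟩ := (h z hz).bound
    obtain ⟨u, hu, v, hv, huv⟩ := eventually_prod_iff.1 hC
    refine ⟨{x | v x}, hv, .of_bound C ?_⟩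
    exact eventually_prod_iff.2 ⟨u, hu, v, mem_principal_self _, huv⟩

lemma exists_abs_le_mul_sq_of_nonneg_of_eq_zero [CompleteSpace E] [CompleteSpace F]
    {G : E × F → ℝ} {l : E → ℝ} {l' : E →L[ℝ] ℝ} {p : E} {K : Set F} (hK : IsCompact K)
    (hG : ∀ z ∈ K, ContDiffAt ℝ 2 G (p, z)) (hl : HasStrictFDerivAt l l' p) (hl' : l' ≠ 0)
    (hlp : l p = 0) (hnonneg : ∀ᶠ q in 𝓝 p, ∀ z, 0 ≤ G (q, z))
    (hzero : ∀ᶠ q in 𝓝 p, l q = 0 → ∀ z, G (q, z) = 0) :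
    ∃ C, ∀ᶠ q in 𝓝 p, ∀ z ∈ K, |G (q, z)| ≤ C * l q ^ 2 := by
  have hbigO : G =O[𝓝 p ×ˢ 𝓟 K] fun x => l x.1 ^ 2 := by
    refine isBigO_prod_principal_of_isCompact hK fun z hz => ?_
    have hfst : Tendsto Prod.fst (𝓝 (p, z)) (𝓝 p) := continuous_fst.tendsto (p, z)
    have hl'fst : l' ∘L .fst ℝ E F ≠ 0 := fun h =>
      hl' (ContinuousLinearMap.ext fun v => by simpa using congr($h (v, 0)))
    refine (isBigO_sq_of_nonneg_of_eq_zero (hG z hz)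
      (HasStrictFDerivAt.comp (p, z) hl hasStrictFDerivAt_fst) hl'fst hlp
      ((hfst.eventually hnonneg).mono fun x hx => hx x.2)
      ((hfst.eventually hzero).mono fun x hx hlx => hx hlx x.2)).mono ?_
    rw [nhds_prod_eq]
    exact prod_mono_right _ nhdsWithin_le_nhds
  obtain ⟨C, hC⟩ := hbigO.bound
  refine ⟨C, ?_⟩
  simpa [eventually_prod_principal_iff] using hC

end Analysis

section FormMinor

section Ring

variable {R M : Type*} [CommRing R] [AddCommGroup M] [Module R M]

/-- The principal `2 × 2` Gram minor of a (not necessarily symmetric) bilinear form on a pair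
of vectors. The extrinsic curvature is the quotient of these minors for the second and the
first fundamental form. -/
def formMinor (B : BilinForm R M) (x y : M) : R :=
  B x x * B y y - B x y * B y x

lemma formMinor_smul (c : R) (B : BilinForm R M) (x y : M) :
    formMinor (c • B) x y = c ^ 2 * formMinor B x y := by
  simp only [formMinor, LinearMap.smul_apply, smul_eq_mul]
  ring

lemma formMinor_smul_smul (B : BilinForm R M) (a b : R) (x y : M) :
    formMinor B (a • x) (b • y) = (a * b) ^ 2 * formMinor B x y := by
  simp only [formMinor, map_smul, LinearMap.smul_apply, smul_eq_mul]
  ring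

lemma formMinor_add_smul_right (B : BilinForm R M) (c : R) (x y : M) :
    formMinor B x (y + c • x) = formMinor B x y := by
  simp only [formMinor, map_add, map_smul, LinearMap.add_apply, LinearMap.smul_apply, smul_eq_mul]
  ring

end Ring

lemma formMinor_eq_zero_of_not_linearIndependent {K M : Type*} [Field K] [AddCommGroup M]
    [Module K M] (B : BilinForm K M) {x y : M} (h : ¬LinearIndependent K ![x, y]) :
    formMinor B x y = 0 := by
  by_cases hx : x = 0
  · simp [formMinor, hx]
  · rw [LinearIndependent.pair_iff' hx] at h
    push Not at h
    obtain ⟨a, rfl⟩ := h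
    simpa [formMinor] using formMinor_add_smul_right B a x 0

lemma formMinor_pos {R M : Type*} [CommRing R] [LinearOrder R] [IsStrictOrderedRing R]
    [AddCommGroup M] [Module R M] [Module.IsTorsionFree R M] {I : BilinForm R M}
    (hpos : ∀ x, x ≠ 0 → 0 < I x x) {x y : M} (h : LinearIndependent R ![x, y]) :
    0 < formMinor I x y :=
  sub_pos.2 ((BilinForm.apply_mul_apply_lt_iff_linearIndependent I hpos x y).2 h)

section OrthonormalBound

variable {M : Type*} [AddCommGroup M] [Module ℝ M] {I B : BilinForm ℝ M} {C : ℝ}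

lemma abs_formMinor_le_of_orthogonal
    (hB : ∀ x y, I x x = 1 → I y y = 1 → I x y = 0 → |formMinor B x y| ≤ C) {x y : M}
    (hx : 0 < I x x) (hy : 0 < I y y) (hxy : I x y = 0) :
    |formMinor B x y| ≤ C * formMinor I x y := by
  have hunit : ∀ {v : M}, 0 < I v v → I ((√(I v v))⁻¹ • v) ((√(I v v))⁻¹ • v) = 1 := by
    intro v hv
    have : √(I v v) ≠ 0 := (Real.sqrt_pos.2 hv).ne'
    simp only [map_smul, LinearMap.smul_apply, smul_eq_mul]
    field_simp
    exact (Real.sq_sqrt hv.le).symm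
  have hbound := hB _ _ (hunit hx) (hunit hy) (by simp [hxy])
  have hI : formMinor I x y = I x x * I y y := by simp [formMinor, hxy]
  have hscale : ((√(I x x))⁻¹ * (√(I y y))⁻¹) ^ 2 = (formMinor I x y)⁻¹ := by
    rw [hI, mul_pow, inv_pow, inv_pow, Real.sq_sqrt hx.le, Real.sq_sqrt hy.le, mul_inv]
  have hminor : 0 < formMinor I x y := hI ▸ mul_pos hx hy
  rwa [formMinor_smul_smul, hscale, abs_mul, abs_inv, abs_of_pos hminor,
    inv_mul_le_iff₀ hminor, mul_comm] at hbound

lemma abs_formMinor_le_of_orthonormal_bound (hpos : ∀ x, x ≠ 0 → 0 < I x x)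
    (hB : ∀ x y, I x x = 1 → I y y = 1 → I x y = 0 → |formMinor B x y| ≤ C) (x y : M) :
    |formMinor B x y| ≤ C * formMinor I x y := by
  by_cases hxy : LinearIndependent ℝ ![x, y]
  · have hx : 0 < I x x := hpos x (hxy.ne_zero 0)
    set a := -(I x y / I x x) with ha
    have horth : I x (y + a • x) = 0 := by simp [ha, hx.ne']
    have hy : 0 < I (y + a • x) (y + a • x) := hpos _ fun h =>
      (formMinor_pos hpos hxy).ne' <| by
        rw [← formMinor_add_smul_right I a, h]
        simp [formMinor]
    simpa only [formMinor_add_smul_right] using abs_formMinor_le_of_orthogonal hB hx hy horth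
  · simp [formMinor_eq_zero_of_not_linearIndependent _ hxy]

end OrthonormalBound

end FormMinor

section DotProduct

variable {n : Type*} [Fintype n]

lemma contDiffAt_dotProduct {𝕜 E : Type*} [NontriviallyNormedField 𝕜] [NormedAddCommGroup E]
    [NormedSpace 𝕜 E] {k : WithTop ℕ∞} {a b : E → n → 𝕜} {x : E} (ha : ContDiffAt 𝕜 k a x)
    (hb : ContDiffAt 𝕜 k b x) : ContDiffAt 𝕜 k (fun y => a y ⬝ᵥ b y) x :=
  .sum fun i _ => (contDiffAt_pi.1 ha i).mul (contDiffAt_pi.1 hb i)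

lemma fderiv_dotProduct_apply {E : Type*} [NormedAddCommGroup E] [NormedSpace ℝ E]
    {a b : E → n → ℝ} {x : E} (ha : DifferentiableAt ℝ a x) (hb : DifferentiableAt ℝ b x)
    (v : E) :
    fderiv ℝ (fun y => a y ⬝ᵥ b y) x v = a x ⬝ᵥ fderiv ℝ b x v + fderiv ℝ a x v ⬝ᵥ b x :=
  congr($(((dotProductBilin ℝ ℝ).toContinuousBilinearMap).fderiv_of_bilinear ha hb) v)

lemma dotProduct_self_nonneg_real (w : n → ℝ) : 0 ≤ w ⬝ᵥ w := by
  simpa using dotProduct_self_star_nonneg w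

lemma norm_le_one_of_dotProduct_self_eq_one {w : n → ℝ} (hw : w ⬝ᵥ w = 1) : ‖w‖ ≤ 1 := by
  refine (pi_norm_le_iff_of_nonneg zero_le_one).2 fun i => ?_
  rw [Real.norm_eq_abs, ← sq_le_one_iff_abs_le_one, sq, ← hw]
  exact Finset.single_le_sum (f := fun j => w j * w j) (fun j _ => mul_self_nonneg _)
    (Finset.mem_univ i)

end DotProduct

section Adjugate

variable {n : Type*} [Fintype n] [DecidableEq n]

lemma exists_adjugate_eq_vecMulVec_of_det_eq_zero {K : Type*} [Field K] {M : Matrix n n K}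
    (hM : M.det = 0) : ∃ u v, M.adjugate = Matrix.vecMulVec u v := by
  by_cases h₀ : M.adjugate = 0
  · exact ⟨0, 0, by simp [h₀]⟩
  obtain ⟨i, j, hij⟩ : ∃ i j, M.adjugate i j ≠ 0 := by
    by_contra! h
    exact h₀ (Matrix.ext h)
  have hker : ∀ k, M.adjugate k ᵥ* M = 0 := fun k => by
    rw [← Matrix.mul_apply_eq_vecMul, M.adjugate_mul, hM, zero_smul]
    rfl
  -- `M` with its `j`-th row replaced by the `i`-th unit vector has determinant `adj M i j ≠ 0`,
  -- so a vector of the left kernel of `M` is determined by its `j`-th entry.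
  have hzero : ∀ z : n → K, z ᵥ* M = 0 → z j = 0 → z = 0 := fun z hz hzj => by
    refine Matrix.eq_zero_of_vecMul_eq_zero (M.adjugate_apply i j ▸ hij) ?_
    rw [← hz]
    ext c
    refine Finset.sum_congr rfl fun a _ => ?_
    obtain rfl | ha := eq_or_ne a j
    · simp [hzj]
    · exact congr(z a * $(congrFun (Matrix.updateRow_ne ha) c))
  refine ⟨fun k => M.adjugate k j / M.adjugate i j, M.adjugate i, Matrix.ext fun k l => ?_⟩
  have hrow := hzero (M.adjugate k - (M.adjugate k j / M.adjugate i j) • M.adjugate i)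
    (by simp [Matrix.sub_vecMul, Matrix.smul_vecMul, hker]) (by simp [hij])
  simpa [sub_eq_zero, Matrix.vecMulVec_apply] using congrFun hrow l

variable {𝕜 E : Type*} [NontriviallyNormedField 𝕜] [NormedAddCommGroup E] [NormedSpace 𝕜 E]
  {k : WithTop ℕ∞} {M : E → Matrix n n 𝕜} {x : E}

lemma contDiffAt_det (hM : ∀ i j, ContDiffAt 𝕜 k (fun y => M y i j) x) :
    ContDiffAt 𝕜 k (fun y => (M y).det) x := by
  simp only [Matrix.det_apply']
  exact .sum fun σ _ => contDiffAt_const.mul (contDiffAt_prod fun i _ => hM _ _)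

lemma contDiffAt_adjugate_apply (hM : ∀ i j, ContDiffAt 𝕜 k (fun y => M y i j) x) (i j : n) :
    ContDiffAt 𝕜 k (fun y => (M y).adjugate i j) x := by
  simp only [Matrix.adjugate_apply]
  refine contDiffAt_det fun a b => ?_
  obtain rfl | ha := eq_or_ne a j
  · simpa using contDiffAt_const
  · simpa [Matrix.updateRow_ne ha] using hM a b

end Adjugate

section FundamentalForms

variable {m N : ℕ}

/-- The first fundamental form `I(X, Y) = ⟨df X, df Y⟩`. -/
def firstForm (f : (Fin m → ℝ) → (Fin N → ℝ)) (q : Fin m → ℝ) : BilinForm ℝ (Fin m → ℝ) :=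
  (dotProductBilin ℝ ℝ).compl₁₂ (fderiv ℝ f q).toLinearMap (fderiv ℝ f q).toLinearMap

/-- The second fundamental form `II(X, Y) = -⟨df X, dν Y⟩`, symmetric for frontals. -/
def secondForm (f ν : (Fin m → ℝ) → (Fin N → ℝ)) (q : Fin m → ℝ) : BilinForm ℝ (Fin m → ℝ) :=
  -(dotProductBilin ℝ ℝ).compl₁₂ (fderiv ℝ f q).toLinearMap (fderiv ℝ ν q).toLinearMap

variable {f ν : (Fin m → ℝ) → (Fin N → ℝ)} {q : Fin m → ℝ}

lemma firstForm_apply (X Y : Fin m → ℝ) :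
    firstForm f q X Y = fderiv ℝ f q X ⬝ᵥ fderiv ℝ f q Y :=
  rfl

lemma secondForm_apply (X Y : Fin m → ℝ) :
    secondForm f ν q X Y = -(fderiv ℝ f q X ⬝ᵥ fderiv ℝ ν q Y) :=
  rfl

lemma formMinor_firstForm_le (X Y : Fin m → ℝ) :
    formMinor (firstForm f q) X Y ≤ firstForm f q X X * firstForm f q Y Y := by
  simp only [formMinor, firstForm_apply, dotProduct_comm (fderiv ℝ f q Y) (fderiv ℝ f q X)]
  exact sub_le_self _ (mul_self_nonneg _)

end FundamentalForms

section Frontal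

variable {m : ℕ} {f ν : (Fin m → ℝ) → (Fin (m + 1) → ℝ)} {q : Fin m → ℝ}

/-- The matrix with rows `∂_1 f, …, ∂_m f, ν`, whose determinant is the Jacobian `λ`. -/
def frameMatrix (f ν : (Fin m → ℝ) → (Fin (m + 1) → ℝ)) (q : Fin m → ℝ) :
    Matrix (Fin (m + 1)) (Fin (m + 1)) ℝ :=
  Matrix.of (Fin.snoc (fun k : Fin m => pd k f q) (ν q))

/-- The adjugate of `df` relative to the unit normal: a left inverse of `df` up to the factor
`λ`, depending smoothly on the point also across the singular set. -/
def adjDeriv (f ν : (Fin m → ℝ) → (Fin (m + 1) → ℝ)) (q : Fin m → ℝ) :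
    (Fin (m + 1) → ℝ) →ₗ[ℝ] (Fin m → ℝ) :=
  LinearMap.funLeft ℝ ℝ Fin.castSucc ∘ₗ (frameMatrix f ν q).adjugate.vecMulLinear

/-- The form `(w, w') ↦ -⟨w, dν (adjDeriv w')⟩` on the ambient space. It is `λ` times the
second fundamental form transported by `df`, and is smooth also across the singular set. -/
def rescaledForm (f ν : (Fin m → ℝ) → (Fin (m + 1) → ℝ)) (q : Fin m → ℝ) :
    BilinForm ℝ (Fin (m + 1) → ℝ) :=
  -(dotProductBilin ℝ ℝ).compl₂ ((fderiv ℝ ν q).toLinearMap ∘ₗ adjDeriv f ν q)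

lemma rescaledForm_apply (w w' : Fin (m + 1) → ℝ) :
    rescaledForm f ν q w w' = -(w ⬝ᵥ fderiv ℝ ν q (adjDeriv f ν q w')) :=
  rfl

lemma frameMatrix_castSucc (k : Fin m) : frameMatrix f ν q k.castSucc = pd k f q := by
  ext
  simp [frameMatrix]

lemma frameMatrix_last : frameMatrix f ν q (Fin.last m) = ν q := by
  ext
  simp [frameMatrix]

lemma vecMul_frameMatrix (x : Fin (m + 1) → ℝ) :
    x ᵥ* frameMatrix f ν q = fderiv ℝ f q (x ∘ Fin.castSucc) + x (Fin.last m) • ν q := by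
  have hdf : fderiv ℝ f q (x ∘ Fin.castSucc) = ∑ k : Fin m, x k.castSucc • pd k f q := by
    conv_lhs => rw [pi_eq_sum_univ' (x ∘ Fin.castSucc), map_sum]
    simp [pd]
  simp [Matrix.vecMul_eq_sum, Fin.sum_univ_castSucc, frameMatrix_castSucc, frameMatrix_last, hdf]

lemma adjDeriv_fderiv (X : Fin m → ℝ) : adjDeriv f ν q (fderiv ℝ f q X) = lamb f ν q • X := by
  have hX := vecMul_frameMatrix (f := f) (ν := ν) (q := q) (Fin.snoc X 0)
  have hsnoc : (Fin.snoc X 0 : Fin (m + 1) → ℝ) ∘ Fin.castSucc = X := by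
    ext k
    simp
  rw [hsnoc, Fin.snoc_last, zero_smul, add_zero] at hX
  have hdet : (frameMatrix f ν q).det = lamb f ν q := rfl
  rw [← hX]
  ext k
  simp [adjDeriv, LinearMap.funLeft_apply, Matrix.vecMul_vecMul, Matrix.mul_adjugate,
    Matrix.vecMul_smul, hdet]

lemma fderiv_adjDeriv_add_smul (w : Fin (m + 1) → ℝ) :
    fderiv ℝ f q (adjDeriv f ν q w) + (w ᵥ* (frameMatrix f ν q).adjugate) (Fin.last m) • ν q
      = lamb f ν q • w := by
  have h := vecMul_frameMatrix (f := f) (ν := ν) (q := q) (w ᵥ* (frameMatrix f ν q).adjugate)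
  rw [Matrix.vecMul_vecMul, Matrix.adjugate_mul, Matrix.vecMul_smul, Matrix.vecMul_one] at h
  exact h.symm

lemma fderiv_injective_of_lamb_ne_zero (hq : lamb f ν q ≠ 0) :
    Function.Injective (fderiv ℝ f q) := fun X Y hXY =>
  smul_right_injective _ hq <| by
    simpa only [adjDeriv_fderiv] using congr(adjDeriv f ν q $hXY)

lemma firstForm_self_pos (hq : lamb f ν q ≠ 0) {X : Fin m → ℝ} (hX : X ≠ 0) :
    0 < firstForm f q X X := by
  rw [firstForm_apply]
  have := (map_ne_zero_iff _ (fderiv_injective_of_lamb_ne_zero hq)).2 hX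
  simpa using Matrix.dotProduct_self_star_pos_iff.2 this

lemma rescaledForm_compl₁₂_fderiv :
    (rescaledForm f ν q).compl₁₂ (fderiv ℝ f q).toLinearMap (fderiv ℝ f q).toLinearMap
      = lamb f ν q • secondForm f ν q := by
  refine LinearMap.ext₂ fun X Y => ?_
  simp [rescaledForm_apply, secondForm_apply, adjDeriv_fderiv]

lemma formMinor_rescaledForm_fderiv (X Y : Fin m → ℝ) :
    formMinor (rescaledForm f ν q) (fderiv ℝ f q X) (fderiv ℝ f q Y)
      = lamb f ν q ^ 2 * formMinor (secondForm f ν q) X Y := by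
  rw [← formMinor_smul, ← rescaledForm_compl₁₂_fderiv]
  rfl

lemma formMinor_rescaledForm_eq_zero (hq : lamb f ν q = 0) (w w' : Fin (m + 1) → ℝ) :
    formMinor (rescaledForm f ν q) w w' = 0 := by
  obtain ⟨u, v, huv⟩ := exists_adjugate_eq_vecMulVec_of_det_eq_zero
    (show (frameMatrix f ν q).det = 0 from hq)
  have hadj : ∀ x, adjDeriv f ν q x = (x ⬝ᵥ u) • (v ∘ Fin.castSucc) := fun x => by
    ext k
    simp [adjDeriv, huv, LinearMap.funLeft_apply, Matrix.vecMul_vecMulVec]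
  simp only [formMinor, rescaledForm_apply, hadj, map_smul, dotProduct_smul, smul_eq_mul]
  ring

/-- `(f, ν)` is a frontal of class `C^n` on the open set `V`: `ν` is a unit normal field
along `f`. -/
structure IsFrontalOn (n : WithTop ℕ∞) (f ν : (Fin m → ℝ) → (Fin (m + 1) → ℝ))
    (V : Set (Fin m → ℝ)) : Prop where
  isOpen : IsOpen V
  contDiffOn_map : ContDiffOn ℝ n f V
  contDiffOn_normal : ContDiffOn ℝ n ν V
  dotProduct_normal_self : ∀ q ∈ V, ν q ⬝ᵥ ν q = 1
  dotProduct_pd_normal : ∀ q ∈ V, ∀ k, pd k f q ⬝ᵥ ν q = 0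

namespace IsFrontalOn

variable {n k : WithTop ℕ∞} {U V : Set (Fin m → ℝ)}

lemma mono (h : IsFrontalOn n f ν U) (hV : IsOpen V) (hVU : V ⊆ U) : IsFrontalOn n f ν V :=
  ⟨hV, h.contDiffOn_map.mono hVU, h.contDiffOn_normal.mono hVU,
    fun q hq => h.dotProduct_normal_self q (hVU hq),
    fun q hq => h.dotProduct_pd_normal q (hVU hq)⟩

lemma of_le (h : IsFrontalOn n f ν V) (hk : k ≤ n) : IsFrontalOn k f ν V :=
  ⟨h.isOpen, h.contDiffOn_map.of_le hk, h.contDiffOn_normal.of_le hk,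
    h.dotProduct_normal_self, h.dotProduct_pd_normal⟩

lemma contDiffAt_map (h : IsFrontalOn n f ν V) (hq : q ∈ V) : ContDiffAt ℝ n f q :=
  h.contDiffOn_map.contDiffAt (h.isOpen.mem_nhds hq)

lemma contDiffAt_normal (h : IsFrontalOn n f ν V) (hq : q ∈ V) : ContDiffAt ℝ n ν q :=
  h.contDiffOn_normal.contDiffAt (h.isOpen.mem_nhds hq)

lemma fderiv_dotProduct_normal (h : IsFrontalOn n f ν V) (hq : q ∈ V) (X : Fin m → ℝ) :
    fderiv ℝ f q X ⬝ᵥ ν q = 0 := by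
  rw [pi_eq_sum_univ' X, map_sum, sum_dotProduct]
  refine Finset.sum_eq_zero fun k _ => ?_
  rw [map_smul, smul_dotProduct]
  exact (congrArg (X k • ·) (h.dotProduct_pd_normal q hq k)).trans (smul_zero _)

lemma normal_dotProduct_fderiv (h : IsFrontalOn n f ν V) (hn : n ≠ 0) (hq : q ∈ V)
    (X : Fin m → ℝ) : ν q ⬝ᵥ fderiv ℝ ν q X = 0 := by
  have hdiff : DifferentiableAt ℝ ν q := (h.contDiffAt_normal hq).differentiableAt hn
  have hconst : (fun y => ν y ⬝ᵥ ν y) =ᶠ[𝓝 q] fun _ => 1 :=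
    eventually_of_mem (h.isOpen.mem_nhds hq) h.dotProduct_normal_self
  have hderiv := fderiv_dotProduct_apply hdiff hdiff X
  rw [hconst.fderiv_eq, fderiv_fun_const, dotProduct_comm (fderiv ℝ ν q X)] at hderiv
  simpa using hderiv.symm

lemma secondForm_comm (h : IsFrontalOn n f ν V) (hn : 2 ≤ n) (hq : q ∈ V) (X Y : Fin m → ℝ) :
    secondForm f ν q X Y = secondForm f ν q Y X := by
  have hn₀ : n ≠ 0 := (two_pos.trans_le hn).ne'
  have hdf : DifferentiableAt ℝ (fderiv ℝ f) q :=
    ((h.contDiffAt_map hq).fderiv_right (m := 1)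
      (one_add_one_eq_two.trans_le hn)).differentiableAt one_ne_zero
  have hderiv : ∀ X Y, secondForm f ν q X Y = fderiv ℝ (fderiv ℝ f) q Y X ⬝ᵥ ν q := by
    intro X Y
    have hzero : (fun y => fderiv ℝ f y X ⬝ᵥ ν y) =ᶠ[𝓝 q] fun _ => 0 :=
      eventually_of_mem (h.isOpen.mem_nhds hq) fun y hy => h.fderiv_dotProduct_normal hy X
    have := fderiv_dotProduct_apply (hdf.clm_apply (differentiableAt_const X))
      ((h.contDiffAt_normal hq).differentiableAt hn₀) Y
    rw [hzero.fderiv_eq, fderiv_fun_const, fderiv_clm_apply hdf (differentiableAt_const X)] at this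
    simpa [secondForm_apply, neg_eq_iff_add_eq_zero] using this.symm
  have hsymm : IsSymmSndFDerivAt ℝ f q :=
    (h.contDiffAt_map hq).isSymmSndFDerivAt (by simpa using hn)
  rw [hderiv, hderiv, hsymm.eq]

lemma Kext_eq_div (h : IsFrontalOn n f ν V) (hn : 2 ≤ n) (hq : q ∈ V) (X Y : Fin m → ℝ) :
    Kext f ν q X Y = formMinor (secondForm f ν q) X Y / formMinor (firstForm f q) X Y := by
  rw [formMinor, formMinor, h.secondForm_comm hn hq Y X]
  simp [Kext, secondForm_apply, firstForm_apply, sq, dotProduct_comm (fderiv ℝ f q Y)]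

lemma fderiv_adjDeriv (h : IsFrontalOn n f ν V) (hq : q ∈ V) (w : Fin (m + 1) → ℝ) :
    fderiv ℝ f q (adjDeriv f ν q w) = lamb f ν q • (w - (w ⬝ᵥ ν q) • ν q) := by
  have hsum := fderiv_adjDeriv_add_smul (f := f) (ν := ν) (q := q) w
  have hcoeff := congr($hsum ⬝ᵥ ν q)
  rw [add_dotProduct, h.fderiv_dotProduct_normal hq, smul_dotProduct, smul_dotProduct,
    h.dotProduct_normal_self q hq, zero_add, smul_eq_mul, mul_one, smul_eq_mul] at hcoeff
  rw [hcoeff, mul_smul] at hsum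
  rw [smul_sub, eq_sub_of_add_eq hsum]

lemma secondForm_compl₁₂_adjDeriv (h : IsFrontalOn n f ν V) (hn : n ≠ 0) (hq : q ∈ V) :
    (secondForm f ν q).compl₁₂ (adjDeriv f ν q) (adjDeriv f ν q)
      = lamb f ν q • rescaledForm f ν q := by
  refine LinearMap.ext₂ fun w w' => ?_
  simp [secondForm_apply, rescaledForm_apply, h.fderiv_adjDeriv hq, sub_dotProduct,
    h.normal_dotProduct_fderiv hn hq]

lemma formMinor_secondForm_adjDeriv (h : IsFrontalOn n f ν V) (hn : n ≠ 0) (hq : q ∈ V)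
    (w w' : Fin (m + 1) → ℝ) :
    formMinor (secondForm f ν q) (adjDeriv f ν q w) (adjDeriv f ν q w')
      = lamb f ν q ^ 2 * formMinor (rescaledForm f ν q) w w' := by
  rw [← formMinor_smul, ← h.secondForm_compl₁₂_adjDeriv hn hq]
  rfl

lemma firstForm_adjDeriv_self_le (h : IsFrontalOn n f ν V) (hq : q ∈ V)
    (w : Fin (m + 1) → ℝ) :
    firstForm f q (adjDeriv f ν q w) (adjDeriv f ν q w) ≤ lamb f ν q ^ 2 * (w ⬝ᵥ w) := by
  have heq : firstForm f q (adjDeriv f ν q w) (adjDeriv f ν q w)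
      = lamb f ν q ^ 2 * (w ⬝ᵥ w - (w ⬝ᵥ ν q) ^ 2) := by
    simp only [firstForm_apply, h.fderiv_adjDeriv hq, smul_dotProduct, dotProduct_smul,
      sub_dotProduct, dotProduct_sub, h.dotProduct_normal_self q hq, dotProduct_comm (ν q) w,
      smul_eq_mul]
    ring
  rw [heq]
  gcongr
  exact sub_le_self _ (sq_nonneg _)

lemma contDiffAt_frameMatrix_apply (h : IsFrontalOn n f ν V) (hk : k + 1 ≤ n) (hq : q ∈ V)
    (i j : Fin (m + 1)) : ContDiffAt ℝ k (fun y => frameMatrix f ν y i j) q := by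
  refine contDiffAt_pi.1 (?_ : ContDiffAt ℝ k (fun y => frameMatrix f ν y i) q) j
  induction i using Fin.lastCases with
  | last =>
    simpa only [frameMatrix_last] using (h.contDiffAt_normal hq).of_le (le_self_add.trans hk)
  | cast i =>
    simpa only [frameMatrix_castSucc, pd] using
      ((h.contDiffAt_map hq).fderiv_right hk).clm_apply contDiffAt_const

lemma contDiffAt_lamb (h : IsFrontalOn n f ν V) (hk : k + 1 ≤ n) (hq : q ∈ V) :
    ContDiffAt ℝ k (lamb f ν) q :=
  contDiffAt_det (h.contDiffAt_frameMatrix_apply hk hq)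

lemma contDiffAt_rescaledForm (h : IsFrontalOn n f ν V) (hk : k + 1 ≤ n)
    {E : Type*} [NormedAddCommGroup E] [NormedSpace ℝ E] {r : E → Fin m → ℝ}
    {a b : E → Fin (m + 1) → ℝ} {x : E} (hx : r x ∈ V) (hr : ContDiffAt ℝ k r x)
    (ha : ContDiffAt ℝ k a x) (hb : ContDiffAt ℝ k b x) :
    ContDiffAt ℝ k (fun y => rescaledForm f ν (r y) (a y) (b y)) x := by
  have hadj : ContDiffAt ℝ k (fun y => adjDeriv f ν (r y) (b y)) x :=
    contDiffAt_pi.2 fun i => contDiffAt_dotProduct hb <| contDiffAt_pi.2 fun j =>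
      contDiffAt_adjugate_apply
        (fun i' j' => (h.contDiffAt_frameMatrix_apply hk hx i' j').comp x hr) j i.castSucc
  have hdν : ContDiffAt ℝ k (fun y => fderiv ℝ ν (r y)) x :=
    ((h.contDiffAt_normal hx).fderiv_right hk).comp x hr
  exact (contDiffAt_dotProduct ha (hdν.clm_apply hadj)).neg

lemma contDiffAt_formMinor_rescaledForm (h : IsFrontalOn n f ν V) (hk : k + 1 ≤ n)
    {E : Type*} [NormedAddCommGroup E] [NormedSpace ℝ E] {r : E → Fin m → ℝ}
    {a b : E → Fin (m + 1) → ℝ} {x : E} (hx : r x ∈ V) (hr : ContDiffAt ℝ k r x)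
    (ha : ContDiffAt ℝ k a x) (hb : ContDiffAt ℝ k b x) :
    ContDiffAt ℝ k (fun y => formMinor (rescaledForm f ν (r y)) (a y) (b y)) x :=
  ((h.contDiffAt_rescaledForm hk hx hr ha ha).mul
    (h.contDiffAt_rescaledForm hk hx hr hb hb)).sub
      ((h.contDiffAt_rescaledForm hk hx hr ha hb).mul
        (h.contDiffAt_rescaledForm hk hx hr hb ha))

lemma neg_le_mul_formMinor_rescaledForm (h : IsFrontalOn n f ν V) (hn : n ≠ 0) (hq : q ∈ V)
    (hreg : lamb f ν q ≠ 0) {s c : ℝ} (hc : 0 ≤ c)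
    (hK : ∀ X Y, -c * formMinor (firstForm f q) X Y ≤ s * formMinor (secondForm f ν q) X Y)
    (w w' : Fin (m + 1) → ℝ) :
    -(c * lamb f ν q ^ 2 * ((w ⬝ᵥ w) * (w' ⬝ᵥ w')))
      ≤ s * formMinor (rescaledForm f ν q) w w' := by
  have hI : formMinor (firstForm f q) (adjDeriv f ν q w) (adjDeriv f ν q w')
      ≤ lamb f ν q ^ 2 * (w ⬝ᵥ w) * (lamb f ν q ^ 2 * (w' ⬝ᵥ w')) :=
    (formMinor_firstForm_le _ _).trans <|
      mul_le_mul (h.firstForm_adjDeriv_self_le hq w) (h.firstForm_adjDeriv_self_le hq w')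
        (dotProduct_self_nonneg_real (fderiv ℝ f q _))
        (mul_nonneg (sq_nonneg _) (dotProduct_self_nonneg_real w))
  have hII := hK (adjDeriv f ν q w) (adjDeriv f ν q w')
  rw [h.formMinor_secondForm_adjDeriv hn hq] at hII
  refine le_of_mul_le_mul_left ?_ (pow_pos (abs_pos.2 hreg) 2)
  rw [sq_abs]
  calc lamb f ν q ^ 2 * -(c * lamb f ν q ^ 2 * ((w ⬝ᵥ w) * (w' ⬝ᵥ w')))
      = -c * (lamb f ν q ^ 2 * (w ⬝ᵥ w) * (lamb f ν q ^ 2 * (w' ⬝ᵥ w'))) := by ring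
    _ ≤ -c * formMinor (firstForm f q) (adjDeriv f ν q w) (adjDeriv f ν q w') :=
      mul_le_mul_of_nonpos_left hI (neg_nonpos.2 hc)
    _ ≤ s * (lamb f ν q ^ 2 * formMinor (rescaledForm f ν q) w w') := hII
    _ = lamb f ν q ^ 2 * (s * formMinor (rescaledForm f ν q) w w') := by ring

variable {p : Fin m → ℝ} {s c : ℝ}

lemma exists_abs_formMinor_rescaledForm_le (h : IsFrontalOn 3 f ν V) (hp : p ∈ V)
    (hsing : lamb f ν p = 0) (hnondeg : fderiv ℝ (lamb f ν) p ≠ 0) (hs : |s| = 1) (hc : 0 ≤ c)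
    (hK : ∀ q ∈ V, lamb f ν q ≠ 0 → ∀ X Y,
      -c * formMinor (firstForm f q) X Y ≤ s * formMinor (secondForm f ν q) X Y) :
    ∃ C, ∀ᶠ q in 𝓝 p, ∀ w w', w ⬝ᵥ w = 1 → w' ⬝ᵥ w' = 1 →
      |formMinor (rescaledForm f ν q) w w'| ≤ C * lamb f ν q ^ 2 := by
  have hk : (2 + 1 : WithTop ℕ∞) ≤ 3 := two_add_one_eq_three.le
  have hV : ∀ᶠ q in 𝓝 p, q ∈ V := h.isOpen.mem_nhds hp
  let G : (Fin m → ℝ) × (Fin (m + 1) → ℝ) × (Fin (m + 1) → ℝ) → ℝ := fun x =>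
    s * formMinor (rescaledForm f ν x.1) x.2.1 x.2.2
      + c * lamb f ν x.1 ^ 2 * ((x.2.1 ⬝ᵥ x.2.1) * (x.2.2 ⬝ᵥ x.2.2))
  have hzero : ∀ q, lamb f ν q = 0 → ∀ z, G (q, z) = 0 := fun q hq z => by
    simp [G, hq, formMinor_rescaledForm_eq_zero]
  have hnonneg : ∀ q ∈ V, ∀ z, 0 ≤ G (q, z) := fun q hq z => by
    by_cases hreg : lamb f ν q = 0
    · exact (hzero q hreg z).ge
    · exact neg_le_iff_add_nonneg.1
        (h.neg_le_mul_formMinor_rescaledForm three_ne_zero hq hreg hc (hK q hq hreg) z.1 z.2)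
  have hsmooth : ∀ z, ContDiffAt ℝ 2 G (p, z) := fun z => by
    have hw : ContDiffAt ℝ 2 (fun x : (Fin m → ℝ) × _ => x.2.1) (p, z) := contDiffAt_snd.fst
    have hw' : ContDiffAt ℝ 2 (fun x : (Fin m → ℝ) × _ => x.2.2) (p, z) := contDiffAt_snd.snd
    have hl := (h.contDiffAt_lamb hk hp).fst' (y := z)
    exact (contDiffAt_const.mul
      (h.contDiffAt_formMinor_rescaledForm hk hp contDiffAt_fst hw hw')).add
        ((contDiffAt_const.mul (hl.pow 2)).mul
          ((contDiffAt_dotProduct hw hw).mul (contDiffAt_dotProduct hw' hw')))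
  obtain ⟨C, hC⟩ := exists_abs_le_mul_sq_of_nonneg_of_eq_zero
    (isCompact_closedBall (0 : (Fin (m + 1) → ℝ) × (Fin (m + 1) → ℝ)) 1) (fun z _ => hsmooth z)
    ((h.contDiffAt_lamb hk hp).hasStrictFDerivAt two_ne_zero) hnondeg hsing
    (hV.mono hnonneg) (.of_forall hzero)
  refine ⟨C + c, hC.mono fun q hq w w' hw hw' => ?_⟩
  have hz : (w, w') ∈ Metric.closedBall (0 : (Fin (m + 1) → ℝ) × (Fin (m + 1) → ℝ)) 1 := by
    simp [norm_le_one_of_dotProduct_self_eq_one hw, norm_le_one_of_dotProduct_self_eq_one hw']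
  calc |formMinor (rescaledForm f ν q) w w'|
      = |G (q, (w, w')) - c * lamb f ν q ^ 2| := by simp [G, hw, hw', abs_mul, hs]
    _ ≤ |G (q, (w, w'))| + |c * lamb f ν q ^ 2| := abs_sub _ _
    _ ≤ C * lamb f ν q ^ 2 + c * lamb f ν q ^ 2 :=
      add_le_add (hq _ hz) (abs_of_nonneg (mul_nonneg hc (sq_nonneg _))).le
    _ = (C + c) * lamb f ν q ^ 2 := (add_mul _ _ _).symm

lemma exists_abs_formMinor_secondForm_le (h : IsFrontalOn 3 f ν V) (hp : p ∈ V)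
    (hsing : lamb f ν p = 0) (hnondeg : fderiv ℝ (lamb f ν) p ≠ 0) (hs : |s| = 1) (hc : 0 ≤ c)
    (hK : ∀ q ∈ V, lamb f ν q ≠ 0 → ∀ X Y,
      -c * formMinor (firstForm f q) X Y ≤ s * formMinor (secondForm f ν q) X Y) :
    ∃ C, ∀ᶠ q in 𝓝 p, lamb f ν q ≠ 0 → ∀ X Y,
      |formMinor (secondForm f ν q) X Y| ≤ C * formMinor (firstForm f q) X Y := by
  obtain ⟨C, hC⟩ := h.exists_abs_formMinor_rescaledForm_le hp hsing hnondeg hs hc hK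
  refine ⟨C, hC.mono fun q hq hreg => ?_⟩
  refine abs_formMinor_le_of_orthonormal_bound (fun X hX => firstForm_self_pos hreg hX)
    fun X Y hX hY _ => ?_
  have hXY := hq (fderiv ℝ f q X) (fderiv ℝ f q Y) hX hY
  have hsq : 0 < lamb f ν q ^ 2 := by positivity
  rw [formMinor_rescaledForm_fderiv, abs_mul, abs_of_pos hsq, mul_comm] at hXY
  exact le_of_mul_le_mul_right hXY hsq

lemma exists_abs_Kext_le (h : IsFrontalOn 3 f ν V) (hp : p ∈ V)
    (hsing : lamb f ν p = 0) (hnondeg : fderiv ℝ (lamb f ν) p ≠ 0) (hs : |s| = 1)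
    (hK : ∀ q ∈ V, lamb f ν q ≠ 0 → ∀ X Y, LinearIndependent ℝ ![X, Y] →
      c ≤ s * Kext f ν q X Y) :
    ∃ C, ∀ᶠ q in 𝓝 p, lamb f ν q ≠ 0 → ∀ X Y, LinearIndependent ℝ ![X, Y] →
      |Kext f ν q X Y| ≤ C := by
  have hn : (2 : WithTop ℕ∞) ≤ 3 := by norm_num
  have hforms : ∀ q ∈ V, lamb f ν q ≠ 0 → ∀ X Y,
      -|c| * formMinor (firstForm f q) X Y ≤ s * formMinor (secondForm f ν q) X Y := by
    intro q hq hreg X Y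
    by_cases hXY : LinearIndependent ℝ ![X, Y]
    · have hI := formMinor_pos (fun X hX => firstForm_self_pos (f := f) hreg hX) hXY
      have hle := (neg_abs_le c).trans (hK q hq hreg X Y hXY)
      rwa [h.Kext_eq_div hn hq, ← mul_div_assoc, le_div_iff₀ hI] at hle
    · simp [formMinor_eq_zero_of_not_linearIndependent _ hXY]
  obtain ⟨C, hC⟩ :=
    h.exists_abs_formMinor_secondForm_le hp hsing hnondeg hs (abs_nonneg c) hforms
  refine ⟨C, ?_⟩
  filter_upwards [hC, h.isOpen.mem_nhds hp] with q hqC hq hreg X Y hXY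
  have hI := formMinor_pos (fun X hX => firstForm_self_pos (f := f) hreg hX) hXY
  rw [h.Kext_eq_div hn hq, abs_div, abs_of_pos hI, div_le_iff₀ hI]
  exact hqC hreg X Y

end IsFrontalOn

end Frontal

theorem Kext_bounded_of_sign_constant_general {m : ℕ} {f ν : (Fin m → ℝ) → (Fin (m + 1) → ℝ)}
    {V : Set (Fin m → ℝ)} {p : Fin m → ℝ} (h : IsFrontalOn 3 f ν V) (hp : p ∈ V)
    (hsing : lamb f ν p = 0) (hnondeg : fderiv ℝ (lamb f ν) p ≠ 0)
    (hK :
      (∃ c, ∀ q ∈ V, lamb f ν q ≠ 0 → ∀ X Y : Fin m → ℝ,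
        LinearIndependent ℝ ![X, Y] → c ≤ Kext f ν q X Y) ∨
      (∃ c, ∀ q ∈ V, lamb f ν q ≠ 0 → ∀ X Y : Fin m → ℝ,
        LinearIndependent ℝ ![X, Y] → Kext f ν q X Y ≤ c)) :
    ∃ W : Set (Fin m → ℝ), IsOpen W ∧ p ∈ W ∧ W ⊆ V ∧
      ∃ C : ℝ, 0 < C ∧
        ∀ q ∈ W, lamb f ν q ≠ 0 → ∀ X Y : Fin m → ℝ,
          LinearIndependent ℝ ![X, Y] → |Kext f ν q X Y| ≤ C := by
  obtain ⟨C, hC⟩ : ∃ C, ∀ᶠ q in 𝓝 p, lamb f ν q ≠ 0 → ∀ X Y,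
      LinearIndependent ℝ ![X, Y] → |Kext f ν q X Y| ≤ C := by
    obtain ⟨c, hc⟩ | ⟨c, hc⟩ := hK
    · exact h.exists_abs_Kext_le hp hsing hnondeg (s := 1) (c := c) abs_one
        (by simpa only [one_mul] using hc)
    · exact h.exists_abs_Kext_le hp hsing hnondeg (s := -1) (c := -c) (by simp)
        (by simpa only [neg_one_mul, neg_le_neg_iff] using hc)
  obtain ⟨W, hWC, hWopen, hpW⟩ := eventually_nhds_iff.1 hC
  exact ⟨W ∩ V, hWopen.inter h.isOpen, ⟨hpW, hp⟩, Set.inter_subset_right, max C 1,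
    lt_max_of_lt_right one_pos, fun q hq hreg X Y hXY =>
      (hWC q hq.1 hreg X Y hXY).trans (le_max_left C 1)⟩

/-- If the extrinsic (= sectional) curvature of a front `(f, ν)` in `ℝ^{m+1}` does not
change sign near an `A₂`-point `p` (off the singular set), then it is bounded near `p`
off the singular set. -/
theorem Kext_bounded_of_sign_constant {m : ℕ} (hm : 2 ≤ m)
    (U : Set (Fin m → ℝ)) (hU : IsOpen U)
    (f ν : (Fin m → ℝ) → (Fin (m + 1) → ℝ))
    (hf : ContDiffOn ℝ (⊤ : ℕ∞) f U) (hν : ContDiffOn ℝ (⊤ : ℕ∞) ν U)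
    (hν1 : ∀ q ∈ U, ν q ⬝ᵥ ν q = 1)
    (htang : ∀ q ∈ U, ∀ k : Fin m, pd k f q ⬝ᵥ ν q = 0)
    (hfront : ∀ q ∈ U, ∀ X : Fin m → ℝ, fderiv ℝ f q X = 0 → fderiv ℝ ν q X = 0 → X = 0)
    (p : Fin m → ℝ) (hp : p ∈ U) (hA2 : IsA2 f ν p)
    (V : Set (Fin m → ℝ)) (hV : IsOpen V) (hpV : p ∈ V) (hVU : V ⊆ U)
    (hsign :
      (∀ q ∈ V, lamb f ν q ≠ 0 → ∀ X Y : Fin m → ℝ,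
        LinearIndependent ℝ ![X, Y] → 0 ≤ Kext f ν q X Y) ∨
      (∀ q ∈ V, lamb f ν q ≠ 0 → ∀ X Y : Fin m → ℝ,
        LinearIndependent ℝ ![X, Y] → Kext f ν q X Y ≤ 0)) :
    ∃ W : Set (Fin m → ℝ), IsOpen W ∧ p ∈ W ∧ W ⊆ V ∧
      ∃ C : ℝ, 0 < C ∧
        ∀ q ∈ W, lamb f ν q ≠ 0 → ∀ X Y : Fin m → ℝ,
          LinearIndependent ℝ ![X, Y] → |Kext f ν q X Y| ≤ C := by
  exact Kext_bounded_of_sign_constant_general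
    (((IsFrontalOn.mk hU hf hν hν1 htang).mono hV hVU).of_le (WithTop.coe_le_coe.2 le_top))
    hpV hA2.1 hA2.2.1 (hsign.imp (⟨0, ·⟩) (⟨0, ·⟩))
end
end
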